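/- arXiv:2304.01579 — 2 statements merged into one kernel-verified Lean document; each statement's English description precedes it below -/
import Mathlib

section
/- Let N ≥ k ≥ 2 be integers. Then the determinant B_k(z) = det[L_{N+k+1−i−j}^{(2k−1)}(−z)]_{i,j=1}^{k} (with L_n^{(α)} = 0 for n < 0) satisfies B_k(z) = T_{N−1,k}^{(0)}(−z) = (−1)^{⌊(N+k)/2⌋} · T_{k−1,N}^{(−2(k+N))}(z). -/
noncomputable section

open Finset

/-- Generalized binomial coefficient `C(x, k)` for real `x`. -/
def genBinom (x : ℝ) (k : ℕ) : ℝ :=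
  (∏ i ∈ Finset.range k, (x - i)) / (Nat.factorial k)

/-- Associated Laguerre polynomial `L_n^{(α)}(z)`, with the convention `L_n^{(α)} = 0` for `n < 0`. -/
def lagL (n : ℤ) (α : ℝ) : ℝ → ℝ := fun z =>
  if n < 0 then 0
  else ∑ k ∈ Finset.range (n.toNat + 1),
    (-1 : ℝ) ^ k * genBinom ((n : ℝ) + α) (n.toNat - k) * z ^ k / (Nat.factorial k)

/-- Generalised Laguerre polynomial
`T_{m,n}^{(μ)}(z) = det[(d/dz)^{j+k} L_{m+n}^{(μ+1)}(z)]_{j,k=0}^{n-1}`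
(with `T_{m,0}^{(μ)} = 1`, the empty determinant). -/
def genLag (m : ℤ) (n : ℕ) (μ : ℝ) : ℝ → ℝ := fun z =>
  Matrix.det (Matrix.of fun j k : Fin n =>
    iteratedDeriv ((j : ℕ) + (k : ℕ)) (lagL (m + n) (μ + 1)) z)

/-- Wronskian `Wr(f_1, …, f_r)(z) = det[(d/dz)^{j-1} f_k(z)]`. -/
def wronskian {r : ℕ} (f : Fin r → ℝ → ℝ) : ℝ → ℝ := fun z =>
  Matrix.det (Matrix.of fun j k : Fin r => iteratedDeriv (j : ℕ) (f k) z)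

/-- The constant `c_{m,n} = (-1)^{n(2m+1+n)/2} ∏_{j=1}^n (j-1)!/(m+j)!`. -/
def cmn (m n : ℕ) : ℝ :=
  (-1 : ℝ) ^ (n * (2 * m + 1 + n) / 2) *
    ∏ j ∈ Finset.range n, (Nat.factorial j : ℝ) / (Nat.factorial (m + j + 1))

/-- `τ_{m,n}^{(μ)}(z) = det[(z d/dz)^{j+k} L_{m+n}^{(n+μ)}(z)]_{j,k=0}^{n-1}`. -/
def tauP (m : ℤ) (n : ℕ) (μ : ℝ) : ℝ → ℝ := fun z =>
  Matrix.det (Matrix.of fun j k : Fin n =>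
    ((fun (g : ℝ → ℝ) => fun t => t * deriv g t)^[(j : ℕ) + (k : ℕ)]
      (lagL (m + n) ((n : ℝ) + μ))) z)

/-- Hirota bilinear operator `D_z(f • g) = f' g - f g'`. -/
def hirota (f g : ℝ → ℝ) (z : ℝ) : ℝ := deriv f z * g z - f z * deriv g z

/-- Probabilists' Hermite polynomial `He_n` as a real function. -/
def He (n : ℕ) : ℝ → ℝ := fun z => Polynomial.aeval z (Polynomial.hermite n)

/-- The fifth Painlevé equation (with `δ = -1/2`) for `w` with parameters `(a, b, c)`,
holding at the point `z`. -/
def PV (a b c : ℝ) (w : ℝ → ℝ) (z : ℝ) : Prop :=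
  iteratedDeriv 2 w z =
    (1 / (2 * w z) + 1 / (w z - 1)) * (deriv w z) ^ 2
      - (1 / z) * deriv w z
      + (w z - 1) ^ 2 * (a * (w z) ^ 2 + b) / (z ^ 2 * w z)
      + c * w z / z
      - w z * (w z + 1) / (2 * (w z - 1))

/-- The Jimbo–Miwa–Okamoto `σ`-equation `S_V` with parameters `(ν₁, ν₂, ν₃)`,
holding at the point `z`. -/
def SV (ν₁ ν₂ ν₃ : ℝ) (σ : ℝ → ℝ) (z : ℝ) : Prop :=
  (z * iteratedDeriv 2 σ z) ^ 2 =
    (2 * (deriv σ z) ^ 2 + (ν₁ + ν₂ + ν₃ - z) * deriv σ z + σ z) ^ 2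
      - 4 * deriv σ z * (deriv σ z + ν₁) * (deriv σ z + ν₂) * (deriv σ z + ν₃)

/-!
The generating function `(1 - X)^{-α-1} exp(-zX/(1 - X))` of the Laguerre polynomials is
multiplicative in `(α + 1, z)`. Hence `∑ Lₙ^{(α)}(z) Xⁿ` and `∑ Lₙ^{(-2-α)}(-z) Xⁿ` are
reciprocal, and `Lₙ^{(α-1)} = Lₙ^{(α)} - Lₙ₋₁^{(α)}`. Since differentiating lowers `n` and raises
`α`, the entries of the Hankel determinant `T_{m,n}^{(μ)}` are, up to signs, iterated differences
in the degree of the polynomials with the single parameter `μ + 2n - 1`. Unitriangular row and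
column operations turn iterated differences into shifts, so `T_{m,n}^{(μ)}` is a Hankel
determinant of Laguerre polynomials of that parameter. Such a determinant is a minor of a
Toeplitz matrix of a generating function, and Jacobi's complementary minor formula equates it, up
to sign, with the complementary minor for the reciprocal series.
-/

section Determinants

open Matrix

variable {R M : Type*} [CommRing R] [AddCommMonoid M]

lemma det_alternating_sign_mul {n : ℕ} (A : Matrix (Fin n) (Fin n) R) :
    det (of fun i j : Fin n => (-1) ^ (i + j : ℕ) * A i j) = det A := by
  let S : Matrix (Fin n) (Fin n) R := diagonal fun i => (-1) ^ (i : ℕ)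
  have hS : S * S = 1 := by simp [S, ← mul_pow]
  rw [← det_conj_of_mul_eq_one (M := S) (M' := S) (N := A) hS hS]
  congr 1
  ext i j
  simp only [S, of_apply, mul_diagonal, diagonal_mul]
  ring

/-- The lower unitriangular matrix of signed binomial coefficients, which sends the vector of the
shifts of a function to the vector of its iterated forward differences. The truncated exponent
`i - a` is harmless: above the diagonal the binomial coefficient vanishes. -/
def fwdDiffMatrix (R : Type*) [CommRing R] (n : ℕ) : Matrix (Fin n) (Fin n) R :=
  of fun i a => (-1) ^ (i - a : ℕ) * (i : ℕ).choose a

lemma det_fwdDiffMatrix (n : ℕ) : (fwdDiffMatrix R n).det = 1 := by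
  rw [det_of_isLowerTriangular]
  · simp [fwdDiffMatrix]
  · intro i a hia
    simp [fwdDiffMatrix, Nat.choose_eq_zero_of_lt (show (i : ℕ) < a from hia)]

lemma sum_fwdDiffMatrix_mul_shift {n : ℕ} (h y : M) (f : M → R) (i : Fin n) :
    ∑ a : Fin n, fwdDiffMatrix R n i a * f (y + (a : ℕ) • h) = (fwdDiff h)^[i] f y := by
  simp only [fwdDiffMatrix, of_apply]
  rw [fwdDiff_iter_eq_sum_shift, Fin.sum_univ_eq_sum_range fun a =>
    (-1) ^ (i - a : ℕ) * ((i : ℕ).choose a : R) * f (y + a • h)]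
  symm
  refine sum_subset_zero_on_sdiff (range_subset_range.2 i.isLt) (fun a ha => ?_) fun a _ => ?_
  · have hia : (i : ℕ) < a := by simpa using (mem_sdiff.1 ha).2
    simp [Nat.choose_eq_zero_of_lt hia]
  · simp [zsmul_eq_mul]

theorem det_fwdDiff_iter_eq_det_shift (n : ℕ) (h y : M) (f : M → R) :
    det (of fun i j : Fin n => (fwdDiff h)^[i + j] f y) =
      det (of fun i j : Fin n => f (y + (i + j : ℕ) • h)) := by
  let D := fwdDiffMatrix R n
  let H : Matrix (Fin n) (Fin n) R := of fun i j => f (y + (i + j : ℕ) • h)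
  have rows (i b : Fin n) : (D * H) i b = (fwdDiff h)^[i] f (y + (b : ℕ) • h) := by
    rw [← sum_fwdDiffMatrix_mul_shift, mul_apply]
    refine sum_congr rfl fun a _ => ?_
    simp only [D, H, of_apply]
    rw [add_assoc, ← add_nsmul, add_comm (b : ℕ)]
  have factorization : (of fun i j : Fin n => (fwdDiff h)^[i + j] f y) = D * H * Dᵀ := by
    ext i j
    rw [mul_apply, of_apply, add_comm, Function.iterate_add_apply, ← sum_fwdDiffMatrix_mul_shift]
    simp only [rows, transpose_apply, mul_comm, D]
  rw [factorization, det_mul, det_mul, det_transpose, det_fwdDiffMatrix, one_mul, mul_one]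

theorem det_toBlocks₁₁_of_mul_eq_one {m n : Type*} [Fintype m] [DecidableEq m] [Fintype n]
    [DecidableEq n] {A B : Matrix (m ⊕ n) (m ⊕ n) R} (hAB : A * B = 1) :
    A.toBlocks₁₁.det = A.det * B.toBlocks₂₂.det := by
  have key : A * fromBlocks 1 B.toBlocks₁₂ 0 B.toBlocks₂₂ =
      fromBlocks A.toBlocks₁₁ 0 A.toBlocks₂₁ 1 := by
    rw [← fromBlocks_toBlocks A, ← fromBlocks_toBlocks B, fromBlocks_multiply, ← fromBlocks_one,
      fromBlocks_inj] at hAB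
    obtain ⟨-, h₁₂, -, h₂₂⟩ := hAB
    conv_lhs => rw [← fromBlocks_toBlocks A, fromBlocks_multiply, h₁₂, h₂₂]
    simp
  simpa using (congrArg det key).symm

lemma prod_range_neg_one_pow (n : ℕ) : ∏ i ∈ range n, (-1 : ℤˣ) ^ i = (-1) ^ (n / 2) := by
  induction n with
  | zero => simp
  | succ n ih =>
    rw [prod_range_succ, ih, ← pow_add]
    exact neg_one_pow_congr (by grind)

lemma sign_revPerm (n : ℕ) : (Fin.revPerm (n := n)).sign = (-1) ^ (n / 2) := by
  have inversions (i : Fin n) : ∏ j ∈ Ioi i,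
      (if Fin.revPerm i < Fin.revPerm j then 1 else -1 : ℤˣ) = (-1) ^ (n - 1 - i : ℕ) := by
    rw [prod_congr rfl fun j hj => if_neg (by simpa using (mem_Ioi.1 hj).le), prod_const,
      Fin.card_Ioi]
  simp only [Equiv.Perm.sign_eq_prod_prod_Ioi, inversions]
  rw [Fin.prod_univ_eq_prod_range fun i => (-1 : ℤˣ) ^ (n - 1 - i), prod_range_reflect,
    prod_range_neg_one_pow]

end Determinants

section Toeplitz

open Matrix PowerSeries
open scoped LaurentSeries

variable {R : Type*} [CommRing R]

/-- The lower triangular Toeplitz matrix whose `d`-th subdiagonal carries the `d`-th coefficient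
of a power series. Coefficients are taken in Laurent series, where those of negative index
vanish. -/
def toeplitz (n : ℕ) (p : R⟦X⟧) : Matrix (Fin n) (Fin n) R :=
  of fun i j => (p : R⸨X⸩).coeff ((i : ℕ) - (j : ℕ))

lemma toeplitz_apply_eq_coeff {n : ℕ} (p : R⟦X⟧) (i j : Fin n) :
    toeplitz n p i j = coeff i (X ^ (j : ℕ) * p) := by
  rw [toeplitz, of_apply, coeff_coe, coeff_X_pow_mul']
  split_ifs <;> first | rfl | omega | (congr 2; omega)

lemma toeplitz_mul (n : ℕ) (p q : R⟦X⟧) : toeplitz n (p * q) = toeplitz n p * toeplitz n q := by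
  ext i j
  rw [mul_apply]
  simp only [toeplitz_apply_eq_coeff]
  rw [Fin.sum_univ_eq_sum_range fun a => coeff i (X ^ a * p) * coeff a (X ^ (j : ℕ) * q),
    mul_left_comm, mul_comm, coeff_mul, Nat.sum_antidiagonal_eq_sum_range_succ_mk]
  refine sum_subset_zero_on_sdiff (range_subset_range.2 i.isLt) (fun a ha => ?_) fun a ha => ?_
  · rw [coeff_X_pow_mul', if_neg (by simpa using (mem_sdiff.1 ha).2), zero_mul]
  · rw [coeff_X_pow_mul' p, if_pos (by simpa [Nat.lt_succ_iff] using ha), mul_comm]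

lemma toeplitz_one (n : ℕ) : toeplitz n (1 : R⟦X⟧) = 1 := by
  ext i j
  simp [toeplitz_apply_eq_coeff, coeff_X_pow, one_apply, Fin.ext_iff]

lemma det_toeplitz (n : ℕ) (p : R⟦X⟧) : (toeplitz n p).det = constantCoeff p ^ n := by
  rw [det_of_isLowerTriangular]
  · simp [toeplitz, coeff_coe]
  · intro i j hij
    have lt : (i : ℕ) < j := hij
    rw [toeplitz_apply_eq_coeff, coeff_X_pow_mul', if_neg (not_le.2 lt)]

theorem det_hankel_eq_of_mul_eq_one {p q : R⟦X⟧} (hp : constantCoeff p = 1) (hpq : p * q = 1)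
    (m n : ℕ) :
    det (of fun i j : Fin m => (p : R⸨X⸩).coeff ((n : ℤ) + m - 1 - (i : ℕ) - (j : ℕ))) =
      (-1) ^ ((n + m) / 2) *
        det (of fun i j : Fin n => (q : R⸨X⸩).coeff ((n : ℤ) + m - 1 - (i : ℕ) - (j : ℕ))) := by
  -- Reversing the order of the rows turns the Toeplitz matrix of `p` into a Hankel matrix.
  let e : Fin m ⊕ Fin n ≃ Fin (m + n) := finSumFinEquiv
  let P := (toeplitz (m + n) p).submatrix (e.trans Fin.revPerm) e
  let Q := (toeplitz (m + n) q).submatrix e (e.trans Fin.revPerm)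
  have hPQ : P * Q = 1 := by
    rw [submatrix_mul_equiv, ← toeplitz_mul, hpq, toeplitz_one, submatrix_one_equiv]
  have hP : P.det = (-1) ^ ((n + m) / 2) := by
    have rows_reversed : P = ((toeplitz (m + n) p).submatrix Fin.revPerm id).submatrix e e := rfl
    rw [rows_reversed, det_submatrix_equiv_self, det_permute, det_toeplitz, hp, sign_revPerm,
      add_comm m n]
    simp
  have hP₁₁ : P.toBlocks₁₁ =
      of fun i j : Fin m => (p : R⸨X⸩).coeff ((n : ℤ) + m - 1 - (i : ℕ) - (j : ℕ)) := by
    ext i j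
    simp only [P, e, toBlocks₁₁, toeplitz, submatrix_apply, of_apply, Equiv.trans_apply,
      finSumFinEquiv_apply_left, Fin.revPerm_apply, Fin.val_rev, Fin.val_castAdd]
    congr 1
    omega
  have hQ₂₂ : Q.toBlocks₂₂.submatrix Fin.revPerm Fin.revPerm =
      of fun i j : Fin n => (q : R⸨X⸩).coeff ((n : ℤ) + m - 1 - (i : ℕ) - (j : ℕ)) := by
    ext i j
    simp only [Q, e, toBlocks₂₂, toeplitz, submatrix_apply, of_apply, Equiv.trans_apply,
      finSumFinEquiv_apply_right, Fin.revPerm_apply, Fin.val_rev, Fin.val_natAdd]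
    congr 1
    omega
  rw [← hP₁₁, det_toBlocks₁₁_of_mul_eq_one hPQ, hP, ← hQ₂₂, det_submatrix_equiv_self]

end Toeplitz

section NegativeBinomialSeries

open PowerSeries

variable {R : Type*} [CommRing R] [BinomialRing R]

/-- The power series `(1 - X)⁻ˢ`, obtained from the binomial series `(1 + X)⁻ˢ` by `X ↦ -X`. -/
def oneSubNegPow (s : R) : R⟦X⟧ := rescale (-1) (binomialSeries R (-s))

lemma coeff_oneSubNegPow (s : R) (n : ℕ) : coeff n (oneSubNegPow s) = Ring.multichoose s n := by
  rw [oneSubNegPow, coeff_rescale, binomialSeries_coeff, Ring.choose_neg',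
    ← Int.cast_negOnePow_natCast]
  simp [Units.smul_def, ← mul_assoc, ← mul_pow]

lemma oneSubNegPow_add (s t : R) :
    oneSubNegPow (s + t) = oneSubNegPow s * oneSubNegPow t := by
  rw [oneSubNegPow, neg_add, binomialSeries_add, map_mul, oneSubNegPow, oneSubNegPow]

lemma oneSubNegPow_zero : oneSubNegPow (0 : R) = 1 := by
  simp [oneSubNegPow]

lemma oneSubNegPow_natCast (k : ℕ) : oneSubNegPow (k : R) = oneSubNegPow 1 ^ k := by
  induction k with
  | zero => simp [oneSubNegPow_zero]
  | succ k ih => rw [Nat.cast_succ, oneSubNegPow_add, ih, pow_succ]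

lemma oneSubNegPow_neg_one : oneSubNegPow (-1 : R) = 1 - X := by
  rw [oneSubNegPow, neg_neg, ← Nat.cast_one, binomialSeries_nat]
  simp [sub_eq_add_neg]

end NegativeBinomialSeries

section Substitution

open PowerSeries

lemma coeff_mul_subst {R : Type*} [CommRing R] {a : R⟦X⟧} (ha : constantCoeff a = 0) (f g : R⟦X⟧)
    (n : ℕ) : coeff n (g * f.subst a) = ∑ k ∈ range (n + 1), coeff k f * coeff n (g * a ^ k) := by
  have coeff_pow_eq_zero {m k : ℕ} (hmk : m < k) : coeff m (a ^ k) = 0 :=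
    X_pow_dvd_iff.1 (pow_dvd_pow_of_dvd (X_dvd_iff.2 ha) k) m hmk
  have coeff_subst_eq_sum {m : ℕ} (hm : m ≤ n) :
      coeff m (f.subst a) = ∑ k ∈ range (n + 1), coeff k f * coeff m (a ^ k) := by
    rw [coeff_subst' (.of_constantCoeff_zero' ha)]
    refine finsum_eq_sum_of_support_subset _ fun k hk => ?_
    by_contra hkn
    have lt : m < k := by grind
    exact hk (by simp only [coeff_pow_eq_zero lt, smul_zero])
  simp only [coeff_mul, mul_sum]
  rw [sum_comm]
  refine sum_congr rfl fun x hx => ?_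
  rw [coeff_subst_eq_sum (le_of_add_le_right (mem_antidiagonal.1 hx).le), mul_sum]
  exact sum_congr rfl fun k _ => mul_left_comm ..

end Substitution

section Laguerre

open PowerSeries
open scoped LaurentSeries

lemma genBinom_eq_choose (x : ℝ) (k : ℕ) : genBinom x k = Ring.choose x k := by
  rw [genBinom, ← descPochhammer_eval_eq_prod_range, ← descPochhammer_map (algebraMap ℤ ℝ),
    Polynomial.eval_map_algebraMap, Polynomial.aeval_eq_smeval, Ring.choose_eq_smul, smul_eq_mul,
    inv_mul_eq_div]

lemma lagL_of_neg {n : ℤ} (hn : n < 0) (α z : ℝ) : lagL n α z = 0 := if_pos hn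

lemma lagL_natCast (n : ℕ) (α z : ℝ) :
    lagL n α z = ∑ k ∈ range (n + 1), (-z) ^ k / k.factorial * Ring.choose (n + α) (n - k) := by
  simp only [lagL, genBinom_eq_choose, (Int.natCast_nonneg n).not_gt, if_false, Int.toNat_natCast,
    Int.cast_natCast]
  refine sum_congr rfl fun k _ => ?_
  rw [neg_pow]
  ring

/-- The generating function `∑ₙ Lₙ^{(α)}(z) Xⁿ` of the Laguerre polynomials of parameter `α`. -/
def laguerreSeries (α z : ℝ) : ℝ⟦X⟧ := mk fun n => lagL n α z

lemma lagL_eq_coeff (n : ℤ) (α z : ℝ) :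
    lagL n α z = ((laguerreSeries α z : ℝ⟦X⟧) : ℝ⸨X⸩).coeff n := by
  rw [coeff_coe]
  split_ifs with hn
  · exact lagL_of_neg hn α z
  · rw [laguerreSeries, coeff_mk, Int.natCast_natAbs, abs_of_nonneg (not_lt.1 hn)]

theorem laguerreSeries_eq_mul_subst_exp (α z : ℝ) :
    laguerreSeries α z =
      oneSubNegPow (α + 1) *
        (rescale (-z) (PowerSeries.exp ℝ)).subst (X * oneSubNegPow (1 : ℝ)) := by
  have coeff_mul_pow {n k : ℕ} (hkn : k ≤ n) :
      coeff n (oneSubNegPow (α + 1) * (X * oneSubNegPow 1) ^ k) = Ring.choose (n + α) (n - k) := by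
    rw [mul_pow, mul_left_comm, ← oneSubNegPow_natCast, ← oneSubNegPow_add, coeff_X_pow_mul',
      if_pos hkn, coeff_oneSubNegPow, Ring.multichoose_eq]
    congr 1
    push_cast [hkn]
    ring
  ext n
  rw [laguerreSeries, coeff_mk, lagL_natCast, coeff_mul_subst (by simp)]
  refine sum_congr rfl fun k hk => ?_
  rw [coeff_mul_pow (mem_range_succ_iff.1 hk), coeff_rescale, coeff_exp]
  simp [div_eq_mul_inv]

theorem laguerreSeries_mul (α β x y : ℝ) :
    laguerreSeries α x * laguerreSeries β y = laguerreSeries (α + β + 1) (x + y) := by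
  simp only [laguerreSeries_eq_mul_subst_exp]
  rw [mul_mul_mul_comm, ← oneSubNegPow_add, ← subst_mul (.of_constantCoeff_zero' (by simp)),
    exp_mul_exp_eq_exp_add, neg_add]
  congr 2
  ring

lemma laguerreSeries_zero (α : ℝ) : laguerreSeries α 0 = oneSubNegPow (α + 1) := by
  rw [laguerreSeries_eq_mul_subst_exp, neg_zero, rescale_zero, RingHom.comp_apply,
    constantCoeff_exp, map_one, ← coe_substAlgHom (.of_constantCoeff_zero' (by simp)), map_one,
    mul_one]

lemma laguerreSeries_eq_one_sub_X_mul (α z : ℝ) :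
    laguerreSeries (α - 1) z = (1 - X) * laguerreSeries α z := by
  have h := laguerreSeries_mul (-2) α 0 z
  rw [laguerreSeries_zero, show (-2 + 1 : ℝ) = -1 by norm_num, oneSubNegPow_neg_one] at h
  rw [h, zero_add]
  congr 1
  ring

lemma lagL_sub_lagL_sub_one (n : ℤ) (α z : ℝ) :
    lagL n α z - lagL (n - 1) α z = lagL n (α - 1) z := by
  simp only [lagL_eq_coeff]
  rw [laguerreSeries_eq_one_sub_X_mul, PowerSeries.coe_mul, PowerSeries.coe_sub,
    PowerSeries.coe_one, PowerSeries.coe_X, sub_mul, one_mul, HahnSeries.coeff_sub,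
    HahnSeries.coeff_single_mul, one_mul]

lemma fwdDiff_iter_lagL (p : ℕ) (n : ℤ) (α z : ℝ) :
    (fwdDiff 1)^[p] (fun m => lagL m α z) n = lagL (n + p) (α - p) z := by
  induction p generalizing n with
  | zero => simp
  | succ p ih =>
    rw [Function.iterate_succ_apply', funext ih, fwdDiff, Nat.cast_succ, Nat.cast_succ, ← sub_sub,
      ← lagL_sub_lagL_sub_one]
    ring_nf

lemma constantCoeff_laguerreSeries (α z : ℝ) : constantCoeff (laguerreSeries α z) = 1 := by
  rw [← coeff_zero_eq_constantCoeff_apply, laguerreSeries, coeff_mk, lagL_natCast]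
  simp

lemma laguerreSeries_mul_eq_one (α z : ℝ) :
    laguerreSeries α z * laguerreSeries (-2 - α) (-z) = 1 := by
  rw [laguerreSeries_mul, add_neg_cancel, laguerreSeries_zero, ← oneSubNegPow_zero]
  congr 1
  ring

lemma hasDerivAt_neg_pow_div_factorial (k : ℕ) (z : ℝ) :
    HasDerivAt (fun x : ℝ => (-x) ^ (k + 1) / (k + 1).factorial) (-((-z) ^ k / k.factorial)) z := by
  refine (((hasDerivAt_neg z).pow (k + 1)).div_const _).congr_deriv ?_
  rw [Nat.factorial_succ]
  push_cast
  field_simp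

lemma hasDerivAt_lagL (n : ℤ) (α z : ℝ) :
    HasDerivAt (lagL n α) (-lagL (n - 1) (α + 1) z) z := by
  rcases lt_or_ge n 0 with hn | hn
  · have lagL_eq_zero : lagL n α = 0 := funext fun _ => lagL_of_neg hn α _
    rw [lagL_eq_zero, lagL_of_neg (by omega), neg_zero]
    exact hasDerivAt_const z 0
  lift n to ℕ using hn
  rw [show lagL n α = _ from funext (lagL_natCast n α)]
  cases n with
  | zero => simpa [lagL_of_neg] using hasDerivAt_const z (1 : ℝ)
  | succ n =>
    simp only [sum_range_succ' _ (n + 1), pow_zero]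
    rw [Nat.cast_succ (R := ℤ), add_sub_cancel_right, lagL_natCast, ← sum_neg_distrib]
    refine (HasDerivAt.fun_sum fun k _ => ?_).add_const _
    refine ((hasDerivAt_neg_pow_div_factorial k z).mul_const _).congr_deriv ?_
    rw [neg_mul, Nat.add_sub_add_right, Nat.cast_succ, add_assoc, add_comm 1 α]

lemma iteratedDeriv_lagL (j : ℕ) (n : ℤ) (α z : ℝ) :
    iteratedDeriv j (lagL n α) z = (-1) ^ j * lagL (n - j) (α + j) z := by
  induction j generalizing z with
  | zero => simp
  | succ j ih =>
    rw [iteratedDeriv_succ, funext ih, ((hasDerivAt_lagL _ _ z).const_mul _).deriv]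
    push_cast
    ring_nf

open Matrix

theorem genLag_eq_det_lagL (m : ℤ) (n : ℕ) (μ z : ℝ) :
    genLag m n μ z =
      det (of fun i j : Fin n => lagL (m + n - (i : ℕ) - (j : ℕ)) (μ + 2 * n - 1) z) := by
  let f (l : ℤ) : ℝ := lagL l (μ + 2 * n - 1) z
  let A : Matrix (Fin n) (Fin n) ℝ :=
    of fun i j => lagL (m + n - (i + j : ℕ)) (μ + 1 + (i + j : ℕ)) z
  calc genLag m n μ z = det A := by
        simp only [genLag, iteratedDeriv_lagL]
        exact det_alternating_sign_mul A
    -- The degree decreases and the parameter increases with `i + j`: reversing the indices makes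
    -- the order of the differences increase instead, from a fixed base point.
    _ = det (of fun i j : Fin n => (fwdDiff 1)^[i + j] f (m + 2 - n)) := by
        rw [← det_submatrix_equiv_self Fin.revPerm A]
        congr 1
        ext i j
        simp only [A, f, submatrix_apply, of_apply, Fin.revPerm_apply, Fin.val_rev,
          fwdDiff_iter_lagL]
        set p := n - (i + 1 : ℕ) + (n - (j + 1))
        have hp : p + (i + j : ℕ) + 2 = 2 * n := by omega
        have cast_hp : (p : ℝ) + (i + j : ℕ) + 2 = 2 * n := mod_cast hp
        congr 1
        · omega
        · linarith
    _ = det (of fun i j : Fin n => f (m + 2 - n + (i + j : ℕ) • 1)) :=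
        det_fwdDiff_iter_eq_det_shift n 1 _ f
    _ = _ := by
        rw [← det_submatrix_equiv_self Fin.revPerm]
        congr 1
        ext i j
        simp only [f, submatrix_apply, of_apply, Fin.revPerm_apply, Fin.val_rev]
        refine congrArg f ?_
        rw [nsmul_eq_mul, mul_one]
        omega

end Laguerre

theorem Bk_eq_genLag_general (N k : ℕ) (μ z : ℝ) :
    Matrix.det (Matrix.of fun i j : Fin k =>
        lagL ((N : ℤ) + k - 1 - (i : ℕ) - (j : ℕ)) (μ + 2 * (k : ℝ) - 1) (-z))
        = genLag ((N : ℤ) - 1) k μ (-z)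
      ∧ Matrix.det (Matrix.of fun i j : Fin k =>
          lagL ((N : ℤ) + k - 1 - (i : ℕ) - (j : ℕ)) (μ + 2 * (k : ℝ) - 1) (-z))
        = (-1 : ℝ) ^ ((N + k) / 2) *
            genLag ((k : ℤ) - 1) N (-μ - 2 * ((k : ℝ) + N)) z := by
  constructor
  · rw [genLag_eq_det_lagL, sub_add_eq_add_sub]
  · have reciprocal := laguerreSeries_mul_eq_one (μ + 2 * k - 1) (-z)
    have hankel := det_hankel_eq_of_mul_eq_one (constantCoeff_laguerreSeries ..) reciprocal k N
    simp only [← lagL_eq_coeff] at hankel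
    have hα : -2 - (μ + 2 * k - 1) = -μ - 2 * (k + N) + 2 * N - 1 := by ring
    rw [hankel, genLag_eq_det_lagL, neg_neg, sub_add_eq_add_sub, add_comm (k : ℤ), hα]

/-- the determinant `B_k(z)` in terms of generalised Laguerre polynomials. -/
theorem Bk_eq_genLag (N k : ℕ) (hk : 2 ≤ k) (hN : k ≤ N) (z : ℝ) :
    Matrix.det (Matrix.of fun i j : Fin k =>
        lagL ((N : ℤ) + k - 1 - (i : ℕ) - (j : ℕ)) (2 * (k : ℝ) - 1) (-z))
        = genLag ((N : ℤ) - 1) k 0 (-z)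
      ∧ Matrix.det (Matrix.of fun i j : Fin k =>
          lagL ((N : ℤ) + k - 1 - (i : ℕ) - (j : ℕ)) (2 * (k : ℝ) - 1) (-z))
        = (-1 : ℝ) ^ ((N + k) / 2) *
            genLag ((k : ℤ) - 1) N (-2 * ((k : ℝ) + N)) z := by
  simpa using Bk_eq_genLag_general N k 0 z
end
end

section
/- Let m ≥ 1, n ≥ 1 be integers and μ ∈ ℝ. Then the rational function u_{m,n}(z) = (d/dz) ln( T_{m−1,n+1}^{(μ−1)}(z) / T_{m−1,n}^{(μ+1)}(z) ) = −T_{m,n}^{(μ)}(z) T_{m−2,n+1}^{(μ)}(z) / ( T_{m−1,n}^{(μ+1)}(z) T_{m−1,n+1}^{(μ−1)}(z) ) satisfies the second-order equation d²u/dz² = (1/2)(1/u + 1/(u−1))(du/dz)² − (1/z)(du/dz) + ((u−1)²κ₁² − u²κ₃²)/(2z²u(u−1)) + (κ₂−κ₄)u(u−1)/z + u(u−1)(2u−1)/2, with κ₁ = m, κ₃ = m+2n+μ+1 and κ₂−κ₄ = μ, at every z ≠ 0 where u is defined and u(z) ∉ {0, 1}. -/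
noncomputable section

open Finset

/-!
By the Desnanot–Jacobi identity, the Hankel determinants `det (f^(j+k))` of any `f` satisfy the Toda
equation. Replacing `f` by `f′ - t f` is a Darboux transformation of the Toda chain, and for
`t = 0, 1` these transformations form a commuting square `f`, `f′`, `f′ - f`, `f′′ - f′`. Ratios of
the four tau functions give variables `u n`, `v n` satisfying the Volterra equations
`u n′ = u n (u n - 1) (v n - v (n + 1))` and
`v (n + 1)′ = v (n + 1) (v (n + 1) - 1) (u n - u (n + 1))`,
and `u n` is the logarithmic derivative of a ratio of tau functions.

Each Volterra step is a Bäcklund transformation of `sP_V` shifting the parameters. Hence if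
`(u 0, v 0) = (f′ / f, 0)` solves `sP_V`, which is the Riccati form of the Laguerre equation for
`f`, then so does every `(u n, v n)`. Eliminating `v n` gives the second-order equation for `u n`.
For a Laguerre polynomial `f` the identities hold in the field of rational functions; clearing
denominators brings them back to polynomials, where they can be evaluated.
-/

section Determinants

theorem derivation_prod {R A ι : Type*} [CommRing R] [CommRing A] [Algebra R A] [DecidableEq ι]
    (D : Derivation R A A) (s : Finset ι) (f : ι → A) :
    D (∏ i ∈ s, f i) = ∑ i ∈ s, D (f i) * ∏ j ∈ s.erase i, f j := by
  induction s using Finset.induction_on with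
  | empty => simp
  | insert a s ha ih =>
    rw [prod_insert ha, D.leibniz, ih, sum_insert ha, erase_insert ha, smul_eq_mul,
      smul_eq_mul, mul_sum, add_comm, mul_comm]
    refine congrArg₂ _ rfl (sum_congr rfl fun i hi => ?_)
    rw [erase_insert_of_ne (ne_of_mem_of_not_mem hi ha).symm,
      prod_insert fun h => ha (mem_of_mem_erase h), mul_left_comm]

theorem derivation_det {R A ι : Type*} [CommRing R] [CommRing A] [Algebra R A] [Fintype ι]
    [DecidableEq ι] (D : Derivation R A A) (M : Matrix ι ι A) :
    D M.det = ∑ i, (M.updateCol i fun j => D (M j i)).det := by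
  simp only [Matrix.det_apply, map_sum]
  rw [sum_comm]
  refine sum_congr rfl fun σ _ => ?_
  rw [Units.smul_def, map_zsmul, derivation_prod, smul_sum]
  refine sum_congr rfl fun i _ => ?_
  rw [← mul_prod_erase univ _ (mem_univ i), Matrix.updateCol_self, Units.smul_def]
  congr 2
  exact prod_congr rfl fun j hj => by rw [Matrix.updateCol_ne (ne_of_mem_erase hj)]

theorem det_submatrix_append {α β K : Type*} [Field K] {n k : ℕ} (M : Matrix α β K)
    {r : Fin n → α} {c : Fin n → β} (h : (M.submatrix r c).det ≠ 0)
    (i : Fin k → α) (j : Fin k → β) :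
    (M.submatrix (Fin.append r i) (Fin.append c j)).det =
      (M.submatrix r c).det *
        ((M - M.submatrix id c * (M.submatrix r c)⁻¹ * M.submatrix r id).submatrix i j).det := by
  have hA : Invertible (M.submatrix r c) := Matrix.invertibleOfIsUnitDet _ h.isUnit
  have hblocks : (M.submatrix (Fin.append r i) (Fin.append c j)).submatrix
      finSumFinEquiv finSumFinEquiv =
      .fromBlocks (M.submatrix r c) (M.submatrix r j) (M.submatrix i c) (M.submatrix i j) := by
    ext (x | x) (y | y) <;> simp
  rw [← Matrix.det_submatrix_equiv_self finSumFinEquiv, hblocks, Matrix.det_fromBlocks₁₁,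
    Matrix.invOf_eq_nonsing_inv]
  rfl

/- The Desnanot–Jacobi identity: the two borders act on the Schur complement of the common minor,
where it is the formula for a 2 × 2 determinant. -/
theorem det_mul_det_submatrix_append {α β K : Type*} [Field K] {n : ℕ} (M : Matrix α β K)
    {r : Fin n → α} {c : Fin n → β} (h : (M.submatrix r c).det ≠ 0) (a a' : α) (b b' : β) :
    (M.submatrix r c).det * (M.submatrix (Fin.append r ![a, a']) (Fin.append c ![b, b'])).det =
      (M.submatrix (Fin.append r ![a]) (Fin.append c ![b])).det *
          (M.submatrix (Fin.append r ![a']) (Fin.append c ![b'])).det -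
        (M.submatrix (Fin.append r ![a]) (Fin.append c ![b'])).det *
          (M.submatrix (Fin.append r ![a']) (Fin.append c ![b])).det := by
  simp only [det_submatrix_append M h, Matrix.det_fin_two, Matrix.det_unique,
    Matrix.submatrix_apply, Matrix.cons_val_zero, Matrix.cons_val_one, Fin.default_eq_zero]
  ring

end Determinants

section Hankel

open scoped Differential

/-- The infinite Hankel matrix `(f^(j+k))` of derivatives of an element of a differential ring. -/
def hankelMatrix {R : Type*} [CommRing R] [Differential R] (f : R) : Matrix ℕ ℕ R :=
  .of fun j k => Differential.deriv^[j + k] f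

/-- The Hankel determinant `det (f^(j+k))` of size `n`, i.e. the Toda tau function of `f`. -/
def hankelDet {R : Type*} [CommRing R] [Differential R] (f : R) (n : ℕ) : R :=
  ((hankelMatrix f).submatrix (Fin.val : Fin n → ℕ) Fin.val).det

section Ring

variable {R : Type*} [CommRing R] [Differential R] (f : R)

theorem hankelDet_zero : hankelDet f 0 = 1 := Matrix.det_fin_zero

theorem hankelDet_one : hankelDet f 1 = f := Matrix.det_fin_one _

theorem hankelMatrix_transpose : (hankelMatrix f).transpose = hankelMatrix f := by
  ext j k
  simp [hankelMatrix, add_comm]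

theorem hankelMatrix_deriv (j k : ℕ) : (hankelMatrix f j k)′ = hankelMatrix f j (k + 1) :=
  (Function.iterate_succ_apply' _ _ _).symm

theorem val_eq_append (n : ℕ) : (Fin.val : Fin (n + 1) → ℕ) = Fin.append Fin.val ![n] := by
  ext i
  cases i using Fin.lastCases <;> simp [Fin.append_right_eq_snoc]

/-- Differentiating any column but the last makes it equal to the next one. -/
theorem det_hankelMatrix_deriv {n : ℕ} (r : Fin (n + 1) → ℕ) :
    ((hankelMatrix f).submatrix r Fin.val).det′ =
      ((hankelMatrix f).submatrix r (Fin.append (Fin.val : Fin n → ℕ) ![n + 1])).det := by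
  rw [derivation_det, sum_eq_single (Fin.last n) _ (by simp)]
  · congr 1
    ext j k
    cases k using Fin.lastCases <;>
      simp [hankelMatrix_deriv, Fin.append_right_eq_snoc, Fin.castSucc_ne_last]
  · intro i _ hi
    have hlt : (i : ℕ) + 1 < n + 1 := by have := Fin.val_lt_last hi; omega
    refine Matrix.det_zero_of_column_eq (i := i) (j := ⟨i + 1, hlt⟩) (by simp [Fin.ext_iff])
      fun j => ?_
    rw [Matrix.updateCol_self, Matrix.updateCol_ne (by simp [Fin.ext_iff])]
    exact hankelMatrix_deriv ..

theorem det_hankelMatrix_submatrix_comm {n : ℕ} (r c : Fin n → ℕ) :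
    ((hankelMatrix f).submatrix r c).det = ((hankelMatrix f).submatrix c r).det := by
  rw [← Matrix.det_transpose, Matrix.transpose_submatrix, hankelMatrix_transpose]

end Ring

variable {K : Type*} [Field K] [Differential K] {f : K}

theorem hankelDet_toda {n : ℕ} (h : hankelDet f n ≠ 0) :
    hankelDet f n * hankelDet f (n + 2) =
      hankelDet f (n + 1) * (hankelDet f (n + 1))′′ - (hankelDet f (n + 1))′ ^ 2 := by
  have htwo : (Fin.val : Fin (n + 2) → ℕ) = Fin.append Fin.val ![n, n + 1] := by
    ext i
    refine Fin.addCases (m := n) (n := 2) (fun i => ?_) (fun i => ?_) i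
    · simp
    · fin_cases i <;> simp
  have hfirst := det_hankelMatrix_deriv f (Fin.val : Fin (n + 1) → ℕ)
  have hfirst' := hfirst.trans (det_hankelMatrix_submatrix_comm f _ _)
  have hsecond := det_hankelMatrix_deriv f (Fin.append (Fin.val : Fin n → ℕ) ![n + 1])
  have hminors := det_mul_det_submatrix_append (hankelMatrix f) h n (n + 1) n (n + 1)
  rwa [← htwo, ← val_eq_append, ← hsecond, ← hfirst', ← hfirst, ← sq] at hminors

end Hankel

section TodaChain

open scoped Differential

local notation "dlog" => Differential.logDeriv

variable {K : Type*} [Field K] [Differential K]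

/-- A solution `τ 0 = 1, τ 1, …` of the Toda equation on its first `r` sites, none of `τ 0, …, τ r`
being zero; `τ (r + 1)` is determined by the equation and may vanish. -/
structure IsTodaChain (r : ℕ) (τ : ℕ → K) : Prop where
  zero : τ 0 = 1
  ne_zero : ∀ n ≤ r, τ n ≠ 0
  toda : ∀ n < r, τ n * τ (n + 2) = τ (n + 1) * (τ (n + 1))′′ - (τ (n + 1))′ ^ 2

theorem isTodaChain_hankelDet {r : ℕ} {f : K} (h : ∀ n ≤ r, hankelDet f n ≠ 0) :
    IsTodaChain r (hankelDet f) :=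
  ⟨hankelDet_zero f, h, fun n hn => hankelDet_toda (h n hn.le)⟩

theorem deriv_eq_mul_logDeriv {a : K} (ha : a ≠ 0) : a′ = a * dlog a :=
  (mul_div_cancel₀ _ ha).symm

theorem logDeriv_mul_div_mul {a b c d : K} (ha : a ≠ 0) (hb : b ≠ 0) (hc : c ≠ 0) (hd : d ≠ 0) :
    dlog (a * b / (c * d)) = dlog a + dlog b - dlog c - dlog d := by
  rw [Differential.logDeriv_div _ _ (mul_ne_zero ha hb) (mul_ne_zero hc hd),
    Differential.logDeriv_mul _ _ ha hb, Differential.logDeriv_mul _ _ hc hd, sub_sub]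

theorem IsTodaChain.deriv_logDeriv {r : ℕ} {τ : ℕ → K} (hτ : IsTodaChain r τ) {n : ℕ} (hn : n < r) :
    (dlog (τ (n + 1)))′ = τ n * τ (n + 2) / τ (n + 1) ^ 2 := by
  have := hτ.ne_zero (n + 1) hn
  simp only [hτ.toda n hn, Differential.logDeriv, Derivation.leibniz_div, smul_eq_mul]
  field_simp

/-- Two Toda chains related by the Darboux transformation `σ 1 = (∂ - t) (τ 1)` with constant
`t`. -/
structure IsDarbouxPair (r : ℕ) (t : K) (τ σ : ℕ → K) : Prop where
  left : IsTodaChain r τ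
  right : IsTodaChain r σ
  deriv_const : t′ = 0
  apply_one : σ 1 = (τ 1)′ - t * τ 1

namespace IsDarbouxPair

variable {r : ℕ} {t : K} {τ σ : ℕ → K}

theorem logDeriv_succ_sub_logDeriv_succ_of (h : IsDarbouxPair r t τ σ) {n : ℕ} (hn : n < r)
    (hq : dlog (τ (n + 1)) - dlog (σ n) - t = τ n * σ (n + 1) / (τ (n + 1) * σ n))
    (hqp : (dlog (τ (n + 1)) - dlog (σ n) - t) * (dlog (σ n) - dlog (τ n)) = (dlog (σ n))′) :
    dlog (σ (n + 1)) - dlog (τ (n + 1)) = τ (n + 2) * σ n / (τ (n + 1) * σ (n + 1)) := by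
  have hτn := h.left.ne_zero n hn.le
  have hτ := h.left.ne_zero (n + 1) hn
  have hσn := h.right.ne_zero n hn.le
  have hσ := h.right.ne_zero (n + 1) hn
  set q := dlog (τ (n + 1)) - dlog (σ n) - t with q_def
  have hq0 : q ≠ 0 := by rw [hq]; positivity
  have hdq : (dlog (τ (n + 1)))′ - (dlog (σ n))′ = q * dlog q := by
    rw [← deriv_eq_mul_logDeriv hq0, q_def, map_sub, map_sub, h.deriv_const, sub_zero]
  have hlog := logDeriv_mul_div_mul hτn hσ hτ hσn
  rw [← hq] at hlog
  rw [hlog, h.left.deriv_logDeriv hn] at hdq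
  apply mul_left_cancel₀ hq0
  calc q * (dlog (σ (n + 1)) - dlog (τ (n + 1)))
      = τ n * τ (n + 2) / τ (n + 1) ^ 2 := by linear_combination hqp - hdq
    _ = q * (τ (n + 2) * σ n / (τ (n + 1) * σ (n + 1))) := by rw [hq]; field_simp

theorem deriv_logDeriv_right_of (h : IsDarbouxPair r t τ σ) {n : ℕ} (hn : n + 1 < r)
    (hq : dlog (τ (n + 1)) - dlog (σ n) - t = τ n * σ (n + 1) / (τ (n + 1) * σ n))
    (hp : dlog (σ (n + 1)) - dlog (τ (n + 1)) = τ (n + 2) * σ n / (τ (n + 1) * σ (n + 1))) :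
    (dlog (τ (n + 2)) - dlog (σ (n + 1)) - t) * (dlog (σ (n + 1)) - dlog (τ (n + 1))) =
      (dlog (σ (n + 1)))′ := by
  have hτ := h.left.ne_zero (n + 1) hn.le
  have hτs := h.left.ne_zero (n + 2) hn
  have hσn := h.right.ne_zero n (by omega)
  have hσ := h.right.ne_zero (n + 1) hn.le
  have hτn := h.left.ne_zero n (by omega)
  set p := dlog (σ (n + 1)) - dlog (τ (n + 1)) with p_def
  have hp0 : p ≠ 0 := by rw [hp]; positivity
  have hdp : (dlog (σ (n + 1)))′ - (dlog (τ (n + 1)))′ = p * dlog p := by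
    rw [← deriv_eq_mul_logDeriv hp0, p_def, map_sub]
  have hlog := logDeriv_mul_div_mul hτs hσn hτ hσ
  rw [← hp] at hlog
  have hpq : (dlog (τ (n + 1)))′ = p * (dlog (τ (n + 1)) - dlog (σ n) - t) := by
    rw [h.left.deriv_logDeriv (Nat.lt_of_succ_lt hn), hp, hq]
    field_simp
  rw [hlog] at hdp
  linear_combination -hdp - hpq

/-- The second derivative of `log (σ n)` factors as `q n * p n` and that of `log (τ (n + 1))` as
`q n * p (n + 1)`, where `q n = (log (τ (n + 1) / σ n))′ - t` and `p n = (log (σ n / τ n))′`. -/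
theorem logDeriv_succ_sub_logDeriv_and (h : IsDarbouxPair r t τ σ) {n : ℕ} (hn : n < r) :
    dlog (τ (n + 1)) - dlog (σ n) - t = τ n * σ (n + 1) / (τ (n + 1) * σ n) ∧
      (dlog (τ (n + 1)) - dlog (σ n) - t) * (dlog (σ n) - dlog (τ n)) = (dlog (σ n))′ := by
  induction n with
  | zero =>
    have hτ := h.left.ne_zero 1 hn
    simp only [zero_add, h.left.zero, h.right.zero, Differential.logDeriv_one, h.apply_one,
      map_zero, sub_zero, mul_zero, and_true, one_mul, mul_one, sub_div, mul_div_cancel_right₀ _ hτ]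
    rfl
  | succ n ih =>
    obtain ⟨hq, hqp⟩ := ih (Nat.lt_of_succ_lt hn)
    have hp := h.logDeriv_succ_sub_logDeriv_succ_of (Nat.lt_of_succ_lt hn) hq hqp
    have hqp' := h.deriv_logDeriv_right_of hn hq hp
    refine ⟨?_, hqp'⟩
    have hτ := h.left.ne_zero (n + 1) hn.le
    have hτs := h.left.ne_zero (n + 2) hn
    have hσn := h.right.ne_zero n (by omega)
    have hσ := h.right.ne_zero (n + 1) hn.le
    have hp0 : dlog (σ (n + 1)) - dlog (τ (n + 1)) ≠ 0 := by rw [hp]; positivity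
    apply mul_right_cancel₀ hp0
    rw [hqp', h.right.deriv_logDeriv (Nat.lt_of_succ_lt hn), hp]
    field_simp

theorem logDeriv_left_succ_sub (h : IsDarbouxPair r t τ σ) {n : ℕ} (hn : n < r) :
    dlog (τ (n + 1)) - dlog (σ n) - t = τ n * σ (n + 1) / (τ (n + 1) * σ n) :=
  (h.logDeriv_succ_sub_logDeriv_and hn).1

theorem logDeriv_right_succ_sub (h : IsDarbouxPair r t τ σ) {n : ℕ} (hn : n < r) :
    dlog (σ (n + 1)) - dlog (τ (n + 1)) = τ (n + 2) * σ n / (τ (n + 1) * σ (n + 1)) :=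
  let ⟨hq, hqp⟩ := h.logDeriv_succ_sub_logDeriv_and hn
  h.logDeriv_succ_sub_logDeriv_succ_of hn hq hqp

end IsDarbouxPair

/-- A commuting square of Darboux transformations of Toda chains: `τ₀`, `τ₁` are the transforms of
`τ` with constants `0`, `1`, and `τ₀₁` is their common transform. -/
structure DarbouxSquare (K : Type*) [Field K] [Differential K] (r : ℕ) where
  (τ τ₀ τ₁ τ₀₁ : ℕ → K)
  pair₀ : IsDarbouxPair r 0 τ τ₀
  pair₁ : IsDarbouxPair r 1 τ τ₁
  pair₀₁ : IsDarbouxPair r 1 τ₀ τ₀₁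
  pair₁₀ : IsDarbouxPair r 0 τ₁ τ₀₁

namespace DarbouxSquare

variable {r : ℕ} (S : DarbouxSquare K r)

/-- The first Volterra variable of the square, which becomes the Painlevé function `u`. -/
def u (n : ℕ) : K := S.τ₀ (n + 1) * S.τ₁ n / (S.τ (n + 1) * S.τ₀₁ n)

/-- The second Volterra variable of the square, which becomes the Painlevé function `v`. -/
def v (n : ℕ) : K := 1 - S.τ n * S.τ₀₁ n / (S.τ₀ n * S.τ₁ n)

theorem ne_zero {n : ℕ} (hn : n ≤ r) :
    S.τ n ≠ 0 ∧ S.τ₀ n ≠ 0 ∧ S.τ₁ n ≠ 0 ∧ S.τ₀₁ n ≠ 0 :=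
  ⟨S.pair₀.left.ne_zero n hn, S.pair₀.right.ne_zero n hn, S.pair₁.right.ne_zero n hn,
    S.pair₀₁.right.ne_zero n hn⟩

theorem v_zero : S.v 0 = 0 := by
  simp [v, S.pair₀.left.zero, S.pair₀.right.zero, S.pair₁.right.zero, S.pair₀₁.right.zero]

theorem u_ne_zero {n : ℕ} (hn : n < r) : S.u n ≠ 0 := by
  obtain ⟨_, _, _, _⟩ := S.ne_zero hn.le
  obtain ⟨_, _, _, _⟩ := S.ne_zero hn
  rw [u]
  positivity

theorem one_sub_v_ne_zero {n : ℕ} (hn : n ≤ r) : 1 - S.v n ≠ 0 := by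
  obtain ⟨_, _, _, _⟩ := S.ne_zero hn
  rw [v, sub_sub_cancel]
  positivity

theorem logDeriv_τ_succ_sub_τ₀ {n : ℕ} (hn : n < r) :
    dlog (S.τ (n + 1)) - dlog (S.τ₀ n) = S.u n * (1 - S.v n) := by
  obtain ⟨_, _, _, _⟩ := S.ne_zero hn.le
  obtain ⟨_, _, _, _⟩ := S.ne_zero hn
  rw [← sub_zero (_ - _), S.pair₀.logDeriv_left_succ_sub hn, u, v]
  field_simp
  ring

theorem logDeriv_τ₁_succ_sub_τ₀₁ {n : ℕ} (hn : n < r) :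
    dlog (S.τ₁ (n + 1)) - dlog (S.τ₀₁ n) = S.u n * (1 - S.v (n + 1)) := by
  obtain ⟨_, _, _, _⟩ := S.ne_zero hn.le
  obtain ⟨_, _, _, _⟩ := S.ne_zero hn
  rw [← sub_zero (_ - _), S.pair₁₀.logDeriv_left_succ_sub hn, u, v]
  field_simp
  ring

theorem logDeriv_τ_succ_sub_τ₁_sub_one {n : ℕ} (hn : n < r) :
    dlog (S.τ (n + 1)) - dlog (S.τ₁ n) - 1 =
      S.τ₀ n * S.τ₁ (n + 1) / (S.τ (n + 1) * S.τ₀₁ n) * (1 - S.v n) := by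
  obtain ⟨_, _, _, _⟩ := S.ne_zero hn.le
  obtain ⟨_, _, _, _⟩ := S.ne_zero hn
  rw [S.pair₁.logDeriv_left_succ_sub hn, v]
  field_simp
  ring

theorem logDeriv_τ₀_succ_sub_τ₀₁_sub_one {n : ℕ} (hn : n < r) :
    dlog (S.τ₀ (n + 1)) - dlog (S.τ₀₁ n) - 1 =
      S.τ₀ n * S.τ₁ (n + 1) / (S.τ (n + 1) * S.τ₀₁ n) * (1 - S.v (n + 1)) := by
  obtain ⟨_, _, _, _⟩ := S.ne_zero hn.le
  obtain ⟨_, _, _, _⟩ := S.ne_zero hn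
  rw [S.pair₀₁.logDeriv_left_succ_sub hn, v]
  field_simp
  ring

theorem u_sub_one_of {n : ℕ} (hn : n < r) (hv : dlog (S.τ₀ n) - dlog (S.τ₁ n) = S.v n) :
    S.u n - 1 = S.τ₀ n * S.τ₁ (n + 1) / (S.τ (n + 1) * S.τ₀₁ n) := by
  apply mul_right_cancel₀ (S.one_sub_v_ne_zero hn.le)
  linear_combination S.logDeriv_τ_succ_sub_τ₁_sub_one hn - S.logDeriv_τ_succ_sub_τ₀ hn - hv

theorem logDeriv_τ₀_sub_τ₁ {n : ℕ} (hn : n ≤ r) : dlog (S.τ₀ n) - dlog (S.τ₁ n) = S.v n := by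
  induction n with
  | zero => simp [v_zero, S.pair₀.right.zero, S.pair₁.right.zero]
  | succ n ih =>
    have hu := S.u_sub_one_of hn (ih (Nat.le_of_succ_le hn))
    linear_combination S.logDeriv_τ₀_succ_sub_τ₀₁_sub_one hn - S.logDeriv_τ₁_succ_sub_τ₀₁ hn -
      (1 - S.v (n + 1)) * hu

theorem u_sub_one {n : ℕ} (hn : n < r) :
    S.u n - 1 = S.τ₀ n * S.τ₁ (n + 1) / (S.τ (n + 1) * S.τ₀₁ n) :=
  S.u_sub_one_of hn (S.logDeriv_τ₀_sub_τ₁ hn.le)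

theorem u_sub_one_ne_zero {n : ℕ} (hn : n < r) : S.u n - 1 ≠ 0 := by
  obtain ⟨_, _, _, _⟩ := S.ne_zero hn.le
  obtain ⟨_, _, _, _⟩ := S.ne_zero hn
  rw [S.u_sub_one hn]
  positivity

theorem v_succ {n : ℕ} (hn : n < r) :
    S.v (n + 1) = -(S.τ (n + 2) * S.τ₀₁ n / (S.τ₀ (n + 1) * S.τ₁ (n + 1))) := by
  obtain ⟨_, _, _, _⟩ := S.ne_zero hn.le
  obtain ⟨_, _, _, _⟩ := S.ne_zero hn
  have h₀ : dlog (S.τ₀ (n + 1)) - dlog (S.τ (n + 1)) =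
      S.τ (n + 2) * S.τ₀₁ n / (S.τ₀ (n + 1) * S.τ₁ (n + 1)) * (S.u n - 1) := by
    rw [S.pair₀.logDeriv_right_succ_sub hn, S.u_sub_one hn]
    field_simp
  have h₁ : dlog (S.τ₁ (n + 1)) - dlog (S.τ (n + 1)) =
      S.τ (n + 2) * S.τ₀₁ n / (S.τ₀ (n + 1) * S.τ₁ (n + 1)) * S.u n := by
    rw [S.pair₁.logDeriv_right_succ_sub hn, u]
    field_simp
  linear_combination h₀ - h₁ - S.logDeriv_τ₀_sub_τ₁ hn

theorem logDeriv_τ₁_succ_sub_τ {n : ℕ} (hn : n < r) :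
    dlog (S.τ₁ (n + 1)) - dlog (S.τ (n + 1)) = -S.v (n + 1) * S.u n := by
  obtain ⟨_, _, _, _⟩ := S.ne_zero hn.le
  obtain ⟨_, _, _, _⟩ := S.ne_zero hn
  rw [S.pair₁.logDeriv_right_succ_sub hn, S.v_succ hn, u]
  field_simp

theorem u_eq_logDeriv_sub {n : ℕ} (hn : n < r) :
    S.u n = dlog (S.τ (n + 1)) - dlog (S.τ₀₁ n) := by
  linear_combination S.logDeriv_τ₁_succ_sub_τ hn - S.logDeriv_τ₁_succ_sub_τ₀₁ hn

theorem deriv_u {n : ℕ} (hn : n < r) :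
    (S.u n)′ = S.u n * (S.u n - 1) * (S.v n - S.v (n + 1)) := by
  obtain ⟨_, _, hτ₁, hτ₀₁⟩ := S.ne_zero hn.le
  obtain ⟨hτ, hτ₀, _, _⟩ := S.ne_zero hn
  have hlog : dlog (S.u n) = (S.u n - 1) * (S.v n - S.v (n + 1)) := by
    rw [u, logDeriv_mul_div_mul hτ₀ hτ₁ hτ hτ₀₁, ← u]
    linear_combination S.logDeriv_τ₀_sub_τ₁ hn + S.logDeriv_τ₁_succ_sub_τ hn -
      S.logDeriv_τ₀_sub_τ₁ hn.le - S.logDeriv_τ_succ_sub_τ₀ hn - S.u_eq_logDeriv_sub hn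
  rw [deriv_eq_mul_logDeriv (S.u_ne_zero hn), hlog, mul_assoc]

theorem v_succ_ne_zero {n : ℕ} (hn : n + 1 < r) : S.v (n + 1) ≠ 0 := by
  obtain ⟨_, _, _, _⟩ := S.ne_zero (n := n) (by omega)
  obtain ⟨_, _, _, _⟩ := S.ne_zero hn.le
  obtain ⟨_, _, _, _⟩ := S.ne_zero hn
  rw [S.v_succ (Nat.lt_of_succ_lt hn), neg_ne_zero]
  positivity

theorem deriv_v_succ {n : ℕ} (hn : n + 1 < r) :
    (S.v (n + 1))′ = S.v (n + 1) * (S.v (n + 1) - 1) * (S.u n - S.u (n + 1)) := by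
  have hn' := Nat.lt_of_succ_lt hn
  obtain ⟨_, _, _, hτ₀₁⟩ := S.ne_zero hn'.le
  obtain ⟨_, hτ₀, hτ₁, _⟩ := S.ne_zero hn'
  obtain ⟨hτ, _, _, _⟩ := S.ne_zero hn
  have hlog : dlog (S.v (n + 1)) = (S.v (n + 1) - 1) * (S.u n - S.u (n + 1)) := by
    have hneg : ∀ a : K, dlog (-a) = dlog a := fun a => by
      rw [Differential.logDeriv, map_neg, neg_div_neg_eq, Differential.logDeriv]
    rw [S.v_succ hn', hneg, logDeriv_mul_div_mul hτ hτ₀₁ hτ₀ hτ₁, ← neg_neg (_ / _), ← S.v_succ hn']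
    linear_combination S.logDeriv_τ_succ_sub_τ₀ hn - S.logDeriv_τ₁_succ_sub_τ₀₁ hn'
  rw [deriv_eq_mul_logDeriv (S.v_succ_ne_zero hn), hlog, mul_assoc]

end DarbouxSquare

end TodaChain

section SymmetricPV

open scoped Differential

/-- The symmetric fifth Painlevé system `sP_V` for `(u, v)`, with independent variable `z` and
constant parameters `κ₁ + κ₂ + κ₃ + κ₄ = 1`, in a differential ring. -/
structure IsSymmetricPV {R : Type*} [CommRing R] [Differential R] (z κ₁ κ₂ κ₃ κ₄ u v : R) :
    Prop where
  deriv_z : z′ = 1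
  deriv_κ₁ : κ₁′ = 0
  deriv_κ₂ : κ₂′ = 0
  deriv_κ₃ : κ₃′ = 0
  sum : κ₁ + κ₂ + κ₃ + κ₄ = 1
  mul_deriv_u : z * u′ = z * (2 * v - 1) * u ^ 2 - (2 * z * v - z + κ₁ + κ₃) * u + κ₁
  mul_deriv_v : z * v′ = z * (1 - 2 * u) * v ^ 2 + (2 * z * u - z - κ₂ - κ₄) * v + κ₂

/-- The second-order equation for `u` with parameters `κ₁, κ₃, c = κ₂ - κ₄`, with all denominators
cleared, at a point where `u, u', u''` take the values `u, u₁, u₂`. -/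
def SymmetricPVEquation {R : Type*} [CommRing R] (z κ₁ κ₃ c u u₁ u₂ : R) : Prop :=
  2 * z ^ 2 * (u * (u - 1)) * u₂ = z ^ 2 * (2 * u - 1) * u₁ ^ 2 - 2 * z * (u * (u - 1)) * u₁ +
    ((u - 1) ^ 2 * κ₁ ^ 2 - u ^ 2 * κ₃ ^ 2) + 2 * z * c * (u * (u - 1)) ^ 2 +
    z ^ 2 * (u * (u - 1)) ^ 2 * (2 * u - 1)

theorem SymmetricPVEquation.eq_div {K : Type*} [Field K] [NeZero (2 : K)] {z κ₁ κ₃ c u u₁ u₂ : K}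
    (h : SymmetricPVEquation z κ₁ κ₃ c u u₁ u₂) (hz : z ≠ 0) (h0 : u ≠ 0) (h1 : u ≠ 1) :
    u₂ = (1 / 2) * (1 / u + 1 / (u - 1)) * u₁ ^ 2 - (1 / z) * u₁ +
      ((u - 1) ^ 2 * κ₁ ^ 2 - u ^ 2 * κ₃ ^ 2) / (2 * z ^ 2 * u * (u - 1)) +
      c * u * (u - 1) / z + u * (u - 1) * (2 * u - 1) / 2 := by
  have h2 : (2 : K) ≠ 0 := two_ne_zero
  have h1' : u - 1 ≠ 0 := sub_ne_zero.2 h1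
  rw [SymmetricPVEquation] at h
  field_simp
  linear_combination h

namespace IsSymmetricPV

/-- Elimination of `v`: differentiate the first equation and replace `v'` using the second. -/
theorem equation {R : Type*} [CommRing R] [Differential R] {z κ₁ κ₂ κ₃ κ₄ u v : R}
    (h : IsSymmetricPV z κ₁ κ₂ κ₃ κ₄ u v) :
    SymmetricPVEquation z κ₁ κ₃ (κ₂ - κ₄) u u′ u′′ := by
  have hu := h.mul_deriv_u
  have hv := h.mul_deriv_v
  have hκ₄ : κ₄ = 1 - κ₁ - κ₂ - κ₃ := by linear_combination h.sum
  have hu' : z * u′ = z * (v + v - 1) * (u * (u - 1)) - (κ₁ + κ₃) * u + κ₁ := by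
    linear_combination hu
  have hu'' := congrArg Differential.deriv hu'
  simp only [map_add, map_sub, Derivation.leibniz, h.deriv_z, h.deriv_κ₁, h.deriv_κ₃, smul_eq_mul,
    Derivation.map_one_eq_zero] at hu''
  rw [SymmetricPVEquation, hκ₄]
  rw [hκ₄] at hv
  linear_combination 2 * z * (u * (u - 1)) * hu'' + 4 * z * (u * (u - 1)) ^ 2 * hv -
    (2 * (κ₁ + κ₃) * (u * (u - 1)) + 2 * z * (2 * u - 1) * u′ - (2 * u - 1) *
      (z * (u * (u - 1)) * (2 * v - 1) + z * u′ + (κ₁ + κ₃) * u - κ₁)) * hu'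

variable {K : Type*} [Field K] [Differential K] {z κ₁ κ₂ κ₃ κ₄ u v v' : K}

/-- The Bäcklund transformation which replaces `v` by the next Volterra variable `v'`. -/
theorem baecklund (h : IsSymmetricPV z κ₁ κ₂ κ₃ κ₄ u v) (h0 : u ≠ 0) (h1 : u - 1 ≠ 0)
    (hv' : u′ = u * (u - 1) * (v - v')) :
    IsSymmetricPV z (1 - κ₂) (-κ₁) (1 - κ₄) (-κ₃) v' u where
  deriv_z := h.deriv_z
  deriv_κ₁ := by simp [h.deriv_κ₂]
  deriv_κ₂ := by simp [h.deriv_κ₁]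
  deriv_κ₃ := by
    simp [eq_sub_of_add_eq' h.sum, h.deriv_κ₁, h.deriv_κ₂, h.deriv_κ₃]
  sum := by linear_combination -h.sum
  mul_deriv_u := by
    have hu := h.mul_deriv_u
    have hv := h.mul_deriv_v
    have hκ₄ : κ₄ = 1 - κ₁ - κ₂ - κ₃ := by linear_combination h.sum
    have hsum : z * (u * (u - 1)) * (v + v' - 1) = (κ₁ + κ₃) * u - κ₁ := by
      linear_combination z * hv' - hu
    have hdsum := congrArg Differential.deriv hsum
    simp only [map_add, map_sub, Derivation.leibniz, h.deriv_z, h.deriv_κ₁, h.deriv_κ₃,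
      smul_eq_mul, Derivation.map_one_eq_zero] at hdsum
    rw [hv'] at hdsum
    apply mul_left_cancel₀ (mul_ne_zero h0 h1)
    rw [hκ₄] at hv ⊢
    linear_combination hdsum - u * (u - 1) * hv
  mul_deriv_v := by
    have := h.mul_deriv_u
    rw [hv'] at this ⊢
    linear_combination -this

end IsSymmetricPV

end SymmetricPV

section LaguerreSeed

open scoped Differential

variable {K : Type*} [Field K] [Differential K]

theorem isDarbouxPair_hankelDet {r : ℕ} {t f g : K} (ht : t′ = 0) (hg : g = f′ - t * f)
    (hf0 : ∀ n ≤ r, hankelDet f n ≠ 0) (hg0 : ∀ n ≤ r, hankelDet g n ≠ 0) :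
    IsDarbouxPair r t (hankelDet f) (hankelDet g) where
  left := isTodaChain_hankelDet hf0
  right := isTodaChain_hankelDet hg0
  deriv_const := ht
  apply_one := by rw [hankelDet_one, hankelDet_one, hg]

/-- The Hankel determinants of `f`, `f′`, `f′ - f` and `f′′ - f′` of sizes up to `r` do not vanish,
so that these four elements generate a Darboux square. -/
structure IsHankelRegular {R : Type*} [CommRing R] [Differential R] (r : ℕ) (f : R) : Prop where
  self : ∀ n ≤ r, hankelDet f n ≠ 0
  deriv : ∀ n ≤ r, hankelDet f′ n ≠ 0
  deriv_sub : ∀ n ≤ r, hankelDet (f′ - f) n ≠ 0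
  deriv_deriv_sub : ∀ n ≤ r, hankelDet (f′′ - f′) n ≠ 0

/-- The Darboux square of Hankel determinants generated by `f`. -/
def IsHankelRegular.darbouxSquare {r : ℕ} {f : K} (h : IsHankelRegular r f) :
    DarbouxSquare K r where
  τ := hankelDet f
  τ₀ := hankelDet f′
  τ₁ := hankelDet (f′ - f)
  τ₀₁ := hankelDet (f′′ - f′)
  pair₀ := isDarbouxPair_hankelDet (map_zero _) (by ring) h.self h.deriv
  pair₁ := isDarbouxPair_hankelDet (Derivation.map_one_eq_zero _) (by ring) h.self h.deriv_sub
  pair₀₁ :=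
    isDarbouxPair_hankelDet (Derivation.map_one_eq_zero _) (by ring) h.deriv h.deriv_deriv_sub
  pair₁₀ :=
    isDarbouxPair_hankelDet (map_zero _) (by rw [map_sub]; ring) h.deriv_sub h.deriv_deriv_sub

/-- On `v = 0` the system reduces to the Riccati equation of the Laguerre equation. -/
theorem isSymmetricPV_logDeriv {z a ν f : K} (hz : z′ = 1) (ha : a′ = 0) (hν : ν′ = 0) (hf : f ≠ 0)
    (h : z * f′′ + (a + 1 - z) * f′ + ν * f = 0) :
    IsSymmetricPV z (-ν) 0 (ν + a + 1) (-a) (Differential.logDeriv f) 0 where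
  deriv_z := hz
  deriv_κ₁ := by rw [map_neg, hν, neg_zero]
  deriv_κ₂ := map_zero _
  deriv_κ₃ := by rw [map_add, map_add, hν, ha, Derivation.map_one_eq_zero, add_zero, add_zero]
  sum := by ring
  mul_deriv_u := by
    simp only [Differential.logDeriv, Derivation.leibniz_div, smul_eq_mul]
    field_simp
    linear_combination f * h
  mul_deriv_v := by rw [map_zero]; ring

namespace DarbouxSquare

variable {r : ℕ} (S : DarbouxSquare K r)

theorem isSymmetricPV {z κ₁ κ₂ κ₃ κ₄ : K} (h : IsSymmetricPV z κ₁ κ₂ κ₃ κ₄ (S.u 0) (S.v 0)) {n : ℕ}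
    (hn : n < r) :
    IsSymmetricPV z (κ₁ + n) (κ₂ - n) (κ₃ + n) (κ₄ - n) (S.u n) (S.v n) := by
  induction n with
  | zero => simpa using h
  | succ n ih =>
    have hn' := Nat.lt_of_succ_lt hn
    have hv1 : S.v (n + 1) - 1 ≠ 0 :=
      sub_ne_zero.2 (sub_ne_zero.1 (S.one_sub_v_ne_zero hn.le)).symm
    convert ((ih hn').baecklund (S.u_ne_zero hn') (S.u_sub_one_ne_zero hn')
      (S.deriv_u hn')).baecklund (S.v_succ_ne_zero hn) hv1 (S.deriv_v_succ hn) using 1 <;>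
    push_cast <;> ring

theorem u_zero_eq_logDeriv (hr : 0 < r) : S.u 0 = Differential.logDeriv (S.τ 1) := by
  rw [S.u_eq_logDeriv_sub hr, S.pair₀₁.right.zero, Differential.logDeriv_one, sub_zero]

theorem symmetricPVEquation {z a ν : K} (hz : z′ = 1) (ha : a′ = 0) (hν : ν′ = 0)
    (h : z * (S.τ 1)′′ + (a + 1 - z) * (S.τ 1)′ + ν * S.τ 1 = 0) {n : ℕ} (hn : n < r) :
    SymmetricPVEquation z (n - ν) (ν + n + a + 1) a (S.u n) (S.u n)′ (S.u n)′′ := by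
  have hr : 0 < r := by omega
  have hseed : IsSymmetricPV z (-ν) 0 (ν + a + 1) (-a) (S.u 0) (S.v 0) := by
    rw [S.u_zero_eq_logDeriv hr, S.v_zero]
    exact isSymmetricPV_logDeriv hz ha hν (S.ne_zero (Nat.one_le_of_lt hr)).1 h
  convert (S.isSymmetricPV hseed hn).equation using 1 <;> ring

end DarbouxSquare

end LaguerreSeed

section EtaleExtension

open scoped Differential

variable (A B : Type*) [CommRing A] [CommRing B] [Algebra A B] [Algebra.FormallyEtale A B]
  [Differential A]

/-- The extension of a derivation along a formally étale map, such as a localization; Mathlib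
expresses its existence through the Kähler differentials. -/
abbrev differentialOfFormallyEtale : Differential B where
  deriv := ((((Algebra.linearMap A B).compDer
    (Differential.deriv : Derivation ℤ A A)).liftKaehlerDifferential.liftBaseChange B) ∘ₗ
      (KaehlerDifferential.tensorKaehlerEquivOfFormallyEtale ℤ A B).symm.toLinearMap).compDer
    (KaehlerDifferential.D ℤ B)

theorem differentialAlgebra_of_formallyEtale :
    letI := differentialOfFormallyEtale A B
    DifferentialAlgebra A B := by
  let := differentialOfFormallyEtale A B
  refine ⟨fun a => ?_⟩
  change LinearMap.liftBaseChange B _ ((KaehlerDifferential.tensorKaehlerEquivOfFormallyEtale ℤ A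
    B).symm (KaehlerDifferential.D ℤ B (algebraMap A B a))) = _
  rw [KaehlerDifferential.tensorKaehlerEquivOfFormallyEtale_symm_D_algebraMap]
  simp

end EtaleExtension

section HankelPolynomial

open scoped Differential
open Polynomial (X C)

theorem algebraMap_iterate_deriv {A B : Type*} [CommRing A] [CommRing B] [Algebra A B]
    [Differential A] [Differential B] [DifferentialAlgebra A B] (f : A) (k : ℕ) :
    algebraMap A B (Differential.deriv^[k] f) = Differential.deriv^[k] (algebraMap A B f) :=
  Function.Semiconj.iterate_right (fun a => (deriv_algebraMap a).symm) k f

theorem algebraMap_hankelDet {A B : Type*} [CommRing A] [CommRing B] [Algebra A B]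
    [Differential A] [Differential B] [DifferentialAlgebra A B] (f : A) (n : ℕ) :
    algebraMap A B (hankelDet f n) = hankelDet (algebraMap A B f) n := by
  rw [hankelDet, hankelDet, RingHom.map_det]
  congr 1
  ext j k
  exact algebraMap_iterate_deriv f _

theorem hankelDet_neg {R : Type*} [CommRing R] [Differential R] (f : R) (n : ℕ) :
    hankelDet (-f) n = (-1) ^ n * hankelDet f n := by
  have hneg : hankelMatrix (-f) = -hankelMatrix f := by
    ext j k
    exact iterate_map_neg Differential.deriv _ f
  rw [hankelDet, hankelDet, hneg, Matrix.submatrix_neg, Pi.neg_apply, Pi.neg_apply, Matrix.det_neg,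
    Fintype.card_fin]

variable {R : Type*} [CommRing R]

/-- Polynomials as a differential ring with `d/dX`. -/
instance differentialPolynomial : Differential (Polynomial R) :=
  ⟨Polynomial.derivative'.restrictScalars ℤ⟩

theorem polynomial_deriv (p : Polynomial R) : p′ = Polynomial.derivative p := rfl

theorem coeff_X_mul_derivative (p : Polynomial R) (k : ℕ) : (X * p′).coeff k = k * p.coeff k := by
  rw [polynomial_deriv]
  cases k with
  | zero => rw [Polynomial.coeff_X_mul_zero, Nat.cast_zero, zero_mul]
  | succ k => rw [Polynomial.coeff_X_mul, Polynomial.coeff_derivative, Nat.cast_succ, mul_comm]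

theorem coeff_det_of_natDegree_le {n N : ℕ} (M : Matrix (Fin n) (Fin n) (Polynomial R))
    (h : ∀ i j, (M i j).natDegree ≤ N) :
    M.det.coeff (n * N) = (M.map fun p => p.coeff N).det := by
  simp only [Matrix.det_apply, Polynomial.finsetSum_coeff, Polynomial.coeff_smul]
  refine sum_congr rfl fun σ _ => congrArg _ ?_
  simpa using Polynomial.coeff_prod_of_natDegree_le univ (fun i => M (σ i) i) N fun i _ => h _ _

variable [IsDomain R] [CharZero R]

/-- Up to row factors this is a Vandermonde determinant, because
`N.descFactorial (j + k) = N.descFactorial j * (N - j).descFactorial k`. -/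
theorem det_descFactorial_ne_zero {n N : ℕ} (hn : n ≤ N + 1) :
    (Matrix.of fun j k : Fin n => (N.descFactorial (j + k) : R)).det ≠ 0 := by
  have hfactor : (Matrix.of fun j k : Fin n => (N.descFactorial (j + k) : R)) =
      .of fun j k => (N.descFactorial j : R) * (Matrix.of fun j k : Fin n =>
        (descPochhammer R k).eval ((N - j : ℕ) : R)) j k := by
    ext j k
    simp only [Matrix.of_apply]
    rw [descPochhammer_eval_eq_descFactorial, ← Nat.cast_mul,
      ← Nat.descFactorial_mul_descFactorial (Nat.le_add_right (j : ℕ) k), Nat.add_sub_cancel_left,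
      mul_comm]
  rw [hfactor, Matrix.det_mul_column, ← Matrix.det_eval_matrixOfPolynomials_eq_det_vandermonde
    (fun j : Fin n => ((N - j : ℕ) : R)) (fun k => descPochhammer R k)
    (fun k => descPochhammer_natDegree R k) fun k => monic_descPochhammer R k]
  refine mul_ne_zero (prod_ne_zero_iff.2 fun j _ => ?_) (Matrix.det_vandermonde_ne_zero_iff.2 ?_)
  · rw [Nat.cast_ne_zero, Ne, Nat.descFactorial_eq_zero_iff_lt]
    omega
  · intro i j hij
    have := Nat.cast_injective (R := R) hij
    omega

/-- After the entry `f^(j+k)` is multiplied by `X ^ (j + k)`, the coefficients of degree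
`f.natDegree` form a nonsingular matrix. -/
theorem hankelDet_ne_zero {f : Polynomial R} (hf : f ≠ 0) {n : ℕ} (hn : n ≤ f.natDegree + 1) :
    hankelDet f n ≠ 0 := by
  set H : Matrix (Fin n) (Fin n) (Polynomial R) :=
    (hankelMatrix f).submatrix (Fin.val : Fin n → ℕ) Fin.val
  set D : Matrix (Fin n) (Fin n) (Polynomial R) := .diagonal fun j => X ^ (j : ℕ)
  have hentry : ∀ j k, (D * H * D) j k =
      X ^ (j + k : ℕ) * Polynomial.derivative^[j + k] f := fun j k => by
    rw [Matrix.mul_diagonal, Matrix.diagonal_mul, pow_add, mul_right_comm]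
    rfl
  have hdegree : ∀ j k, ((D * H * D) j k).natDegree ≤ f.natDegree := fun j k => by
    rw [hentry]
    rcases Nat.lt_or_ge f.natDegree (j + k) with hlt | hle
    · simp [Polynomial.iterate_derivative_eq_zero hlt]
    · refine Polynomial.natDegree_mul_le.trans ?_
      have := Polynomial.natDegree_iterate_derivative f (j + k)
      rw [Polynomial.natDegree_X_pow]
      omega
  have hcoeff : (D * H * D).map (fun p => p.coeff f.natDegree) =
      f.leadingCoeff • .of fun j k : Fin n => (f.natDegree.descFactorial (j + k) : R) := by
    ext j k
    rw [Matrix.map_apply, hentry, Polynomial.coeff_X_pow_mul', Matrix.smul_apply, Matrix.of_apply,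
      smul_eq_mul]
    split_ifs with hle
    · rw [Polynomial.coeff_iterate_derivative, Nat.sub_add_cancel hle, nsmul_eq_mul, mul_comm]
      rfl
    · rw [Nat.descFactorial_eq_zero_iff_lt.2 (not_le.1 hle), Nat.cast_zero, mul_zero]
  intro h0
  have htop := coeff_det_of_natDegree_le _ hdegree
  rw [hcoeff, Matrix.det_smul, Matrix.det_mul, Matrix.det_mul, show H.det = 0 from h0, mul_zero,
    zero_mul, Polynomial.coeff_zero] at htop
  exact mul_ne_zero (pow_ne_zero _ (Polynomial.leadingCoeff_ne_zero.2 hf))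
    (det_descFactorial_ne_zero hn) htop.symm

end HankelPolynomial

section Quotient

open scoped Differential

/-- The numerator of the derivative of `p / q` over `q ^ 2`. -/
def quotientDeriv {R : Type*} [CommRing R] [Differential R] (p q : R) : R := p′ * q - p * q′

/-- The numerator of the second derivative of `p / q` over `q ^ 3`. -/
def quotientDerivTwo {R : Type*} [CommRing R] [Differential R] (p q : R) : R :=
  (quotientDeriv p q)′ * q - 2 * quotientDeriv p q * q′

theorem quotientDeriv_quotientDeriv_sq {R : Type*} [CommRing R] [Differential R] (p q : R) :
    quotientDeriv (quotientDeriv p q) (q ^ 2) = q * quotientDerivTwo p q := by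
  rw [quotientDerivTwo, quotientDeriv.eq_1 _ (q ^ 2), sq q, Derivation.leibniz, smul_eq_mul]
  ring

/-- `SymmetricPVEquation` for a quotient `p / q` with derivatives `d / q ^ 2` and `e / q ^ 3`, with
the powers of `q` cleared. -/
def SymmetricPVEquationDiv {R : Type*} [CommRing R] (z κ₁ κ₃ c p q d e : R) : Prop :=
  2 * z ^ 2 * (p * (p - q)) * e = z ^ 2 * (2 * p - q) * d ^ 2 - 2 * z * (p * (p - q)) * d * q +
    ((p - q) ^ 2 * κ₁ ^ 2 - p ^ 2 * κ₃ ^ 2) * q ^ 3 + 2 * z * c * (p * (p - q)) ^ 2 * q +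
    z ^ 2 * (p * (p - q)) ^ 2 * (2 * p - q)

theorem symmetricPVEquation_div {K : Type*} [Field K] {z κ₁ κ₃ c p q d e : K} (hq : q ≠ 0) :
    SymmetricPVEquation z κ₁ κ₃ c (p / q) (d / q ^ 2) (e / q ^ 3) ↔
      SymmetricPVEquationDiv z κ₁ κ₃ c p q d e := by
  rw [SymmetricPVEquation, SymmetricPVEquationDiv, ← mul_left_inj' (pow_ne_zero 5 hq)]
  refine Eq.congr ?_ ?_ <;> field_simp

theorem map_symmetricPVEquationDiv {R S : Type*} [CommRing R] [CommRing S] {φ : R →+* S}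
    (hφ : Function.Injective φ) {z κ₁ κ₃ c p q d e : R} :
    SymmetricPVEquationDiv (φ z) (φ κ₁) (φ κ₃) (φ c) (φ p) (φ q) (φ d) (φ e) ↔
      SymmetricPVEquationDiv z κ₁ κ₃ c p q d e := by
  simp only [SymmetricPVEquationDiv, ← map_ofNat φ 2, ← map_mul, ← map_sub, ← map_pow, ← map_add,
    hφ.eq_iff]

theorem SymmetricPVEquationDiv.map {R S : Type*} [CommRing R] [CommRing S]
    {z κ₁ κ₃ c p q d e : R} (h : SymmetricPVEquationDiv z κ₁ κ₃ c p q d e) (φ : R →+* S) :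
    SymmetricPVEquationDiv (φ z) (φ κ₁) (φ κ₃) (φ c) (φ p) (φ q) (φ d) (φ e) := by
  simpa only [SymmetricPVEquationDiv, map_mul, map_sub, map_pow, map_add, map_ofNat] using
    congrArg φ h

section Field

variable {K : Type*} [Field K] [Differential K] {p q : K}

theorem deriv_div_eq_quotientDeriv (p q : K) : (p / q)′ = quotientDeriv p q / q ^ 2 := by
  rw [Derivation.leibniz_div, smul_eq_mul, smul_eq_mul, smul_eq_mul, quotientDeriv]
  ring

theorem deriv_deriv_div_eq_quotientDerivTwo (hq : q ≠ 0) :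
    (p / q)′′ = quotientDerivTwo p q / q ^ 3 := by
  rw [deriv_div_eq_quotientDeriv, deriv_div_eq_quotientDeriv, quotientDeriv_quotientDeriv_sq]
  field_simp

theorem logDeriv_sub_eq_quotientDeriv (hp : p ≠ 0) (hq : q ≠ 0) :
    Differential.logDeriv p - Differential.logDeriv q = quotientDeriv p q / (p * q) := by
  rw [Differential.logDeriv, Differential.logDeriv, quotientDeriv, div_sub_div _ _ hp hq]

end Field

section DifferentialAlgebra

variable {A B : Type*} [CommRing A] [CommRing B] [Algebra A B] [Differential A] [Differential B]
  [DifferentialAlgebra A B]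

theorem algebraMap_quotientDeriv (p q : A) :
    algebraMap A B (quotientDeriv p q) = quotientDeriv (algebraMap A B p) (algebraMap A B q) := by
  simp only [quotientDeriv, map_sub, map_mul, deriv_algebraMap]

theorem algebraMap_quotientDerivTwo (p q : A) :
    algebraMap A B (quotientDerivTwo p q) =
      quotientDerivTwo (algebraMap A B p) (algebraMap A B q) := by
  simp only [quotientDerivTwo, ← algebraMap_quotientDeriv, map_sub, map_mul, deriv_algebraMap,
    map_ofNat]

end DifferentialAlgebra

section RealPolynomial

open Polynomial (eval)

variable {p q : Polynomial ℝ} {x : ℝ}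

theorem hasDerivAt_eval_div (hq : eval x q ≠ 0) :
    HasDerivAt (fun t => eval t p / eval t q) (eval x (quotientDeriv p q) / eval x q ^ 2) x := by
  simpa [quotientDeriv, polynomial_deriv] using (p.hasDerivAt x).fun_div (q.hasDerivAt x) hq

theorem iteratedDeriv_two_eval_div (hq : eval x q ≠ 0) :
    iteratedDeriv 2 (fun t => eval t p / eval t q) x =
      eval x (quotientDerivTwo p q) / eval x q ^ 3 := by
  have hfirst : deriv (fun t => eval t p / eval t q) =ᶠ[nhds x]
      fun t => eval t (quotientDeriv p q) / eval t (q ^ 2) := by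
    filter_upwards [q.continuous.continuousAt.eventually_ne hq] with t ht
    rw [(hasDerivAt_eval_div ht).deriv, Polynomial.eval_pow]
  have hq2 : eval x (q ^ 2) ≠ 0 := by
    rw [Polynomial.eval_pow]
    exact pow_ne_zero 2 hq
  rw [iteratedDeriv_succ, iteratedDeriv_one, hfirst.deriv_eq, (hasDerivAt_eval_div hq2).deriv,
    quotientDeriv_quotientDeriv_sq, Polynomial.eval_mul, Polynomial.eval_pow]
  field_simp

theorem deriv_log_eval_div (hp : eval x p ≠ 0) (hq : eval x q ≠ 0) :
    deriv (fun t => Real.log (eval t p / eval t q)) x =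
      eval x (quotientDeriv p q) / (eval x p * eval x q) := by
  rw [((hasDerivAt_eval_div hq).log (div_ne_zero hp hq)).deriv]
  field_simp

end RealPolynomial

end Quotient

section HankelQuotient

open scoped Differential

/-- The numerator of the Volterra variable `u n` of the Darboux square generated by `f`. -/
def hankelNum {R : Type*} [CommRing R] [Differential R] (f : R) (n : ℕ) : R :=
  hankelDet f′ (n + 1) * hankelDet (f′ - f) n

/-- The denominator of the Volterra variable `u n` of the Darboux square generated by `f`. -/
def hankelDenom {R : Type*} [CommRing R] [Differential R] (f : R) (n : ℕ) : R :=
  hankelDet f (n + 1) * hankelDet (f′′ - f′) n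

section Field

variable {K : Type*} [Field K] [Differential K] {f : K} {n : ℕ}

theorem quotientDeriv_hankelDet_of_field (h : IsHankelRegular (n + 1) f) :
    quotientDeriv (hankelDet f (n + 1)) (hankelDet (f′′ - f′) n) = hankelNum f n := by
  have hu : hankelNum f n / hankelDenom f n = _ := h.darbouxSquare.u_eq_logDeriv_sub n.lt_succ_self
  have hτ := h.self (n + 1) le_rfl
  have hτ₀₁ := h.deriv_deriv_sub n n.le_succ
  exact ((div_left_inj' (mul_ne_zero hτ hτ₀₁)).1
    (hu.trans (logDeriv_sub_eq_quotientDeriv hτ hτ₀₁))).symm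

theorem symmetricPVEquationDiv_hankel_of_field {z a ν : K} (h : IsHankelRegular (n + 1) f)
    (hz : z′ = 1) (ha : a′ = 0) (hν : ν′ = 0)
    (hf : z * f′′ + (a + 1 - z) * f′ + ν * f = 0) :
    SymmetricPVEquationDiv z (n - ν) (ν + n + a + 1) a (hankelNum f n) (hankelDenom f n)
      (quotientDeriv (hankelNum f n) (hankelDenom f n))
      (quotientDerivTwo (hankelNum f n) (hankelDenom f n)) := by
  have hdenom : hankelDenom f n ≠ 0 :=
    mul_ne_zero (h.self _ le_rfl) (h.deriv_deriv_sub n n.le_succ)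
  rw [← symmetricPVEquation_div hdenom, ← deriv_div_eq_quotientDeriv,
    ← deriv_deriv_div_eq_quotientDerivTwo hdenom]
  rw [← hankelDet_one f] at hf
  exact h.darbouxSquare.symmetricPVEquation hz ha hν hf n.lt_succ_self

end Field

section DifferentialAlgebra

variable {A B : Type*} [CommRing A] [CommRing B] [Algebra A B] [Differential A] [Differential B]
  [DifferentialAlgebra A B]

theorem algebraMap_hankelNum (f : A) (n : ℕ) :
    algebraMap A B (hankelNum f n) = hankelNum (algebraMap A B f) n := by
  simp only [hankelNum, map_mul, algebraMap_hankelDet, map_sub, deriv_algebraMap]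

theorem algebraMap_hankelDenom (f : A) (n : ℕ) :
    algebraMap A B (hankelDenom f n) = hankelDenom (algebraMap A B f) n := by
  simp only [hankelDenom, map_mul, algebraMap_hankelDet, map_sub, deriv_algebraMap]

theorem isHankelRegular_algebraMap [FaithfulSMul A B] {r : ℕ} {f : A} (h : IsHankelRegular r f) :
    IsHankelRegular r (algebraMap A B f) := by
  have hinj : ∀ {g : A} {k : ℕ}, hankelDet g k ≠ 0 → hankelDet (algebraMap A B g) k ≠ 0 :=
    fun hg => by
      rwa [← algebraMap_hankelDet, Ne, FaithfulSMul.algebraMap_eq_zero_iff]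
  refine ⟨fun k hk => hinj (h.self k hk), fun k hk => ?_, fun k hk => ?_, fun k hk => ?_⟩
  · rw [deriv_algebraMap]
    exact hinj (h.deriv k hk)
  · rw [deriv_algebraMap, ← map_sub]
    exact hinj (h.deriv_sub k hk)
  · rw [deriv_algebraMap, deriv_algebraMap, ← map_sub]
    exact hinj (h.deriv_deriv_sub k hk)

end DifferentialAlgebra

section Domain

variable {A : Type*} [CommRing A] [IsDomain A] [Differential A] {f : A} {n : ℕ}

theorem quotientDeriv_hankelDet (h : IsHankelRegular (n + 1) f) :
    quotientDeriv (hankelDet f (n + 1)) (hankelDet (f′′ - f′) n) = hankelNum f n := by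
  let := differentialOfFormallyEtale A (FractionRing A)
  have := differentialAlgebra_of_formallyEtale A (FractionRing A)
  apply FaithfulSMul.algebraMap_injective A (FractionRing A)
  have := quotientDeriv_hankelDet_of_field (isHankelRegular_algebraMap (B := FractionRing A) h)
  simpa only [algebraMap_quotientDeriv, algebraMap_hankelNum, algebraMap_hankelDet, map_sub,
    deriv_algebraMap] using this

theorem symmetricPVEquationDiv_hankel {z a ν : A} (h : IsHankelRegular (n + 1) f)
    (hz : z′ = 1) (ha : a′ = 0) (hν : ν′ = 0)
    (hf : z * f′′ + (a + 1 - z) * f′ + ν * f = 0) :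
    SymmetricPVEquationDiv z (n - ν) (ν + n + a + 1) a (hankelNum f n) (hankelDenom f n)
      (quotientDeriv (hankelNum f n) (hankelDenom f n))
      (quotientDerivTwo (hankelNum f n) (hankelDenom f n)) := by
  let K := FractionRing A
  let := differentialOfFormallyEtale A K
  have := differentialAlgebra_of_formallyEtale A K
  rw [← map_symmetricPVEquationDiv (FaithfulSMul.algebraMap_injective A K)]
  simp only [algebraMap_quotientDeriv, algebraMap_quotientDerivTwo, algebraMap_hankelNum,
    algebraMap_hankelDenom, map_sub, map_add, map_natCast, map_one]
  refine symmetricPVEquationDiv_hankel_of_field (isHankelRegular_algebraMap h) ?_ ?_ ?_ ?_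
  · rw [deriv_algebraMap, hz, map_one]
  · rw [deriv_algebraMap, ha, map_zero]
  · rw [deriv_algebraMap, hν, map_zero]
  · simpa only [map_add, map_sub, map_mul, map_one, map_zero, deriv_algebraMap] using
      congrArg (algebraMap A K) hf

end Domain

end HankelQuotient

section Laguerre

open scoped Differential
open Polynomial (X C eval)

theorem genBinom_zero (x : ℝ) : genBinom x 0 = 1 := by simp [genBinom]

theorem genBinom_succ_mul (x : ℝ) (k : ℕ) :
    genBinom x (k + 1) * (k + 1) = genBinom x k * (x - k) := by
  rw [genBinom, genBinom, prod_range_succ, Nat.factorial_succ, Nat.cast_mul, Nat.cast_succ]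
  field_simp

theorem genBinom_succ_succ (x : ℝ) (k : ℕ) :
    genBinom (x + 1) (k + 1) = genBinom x (k + 1) + genBinom x k := by
  have hshift : genBinom (x + 1) (k + 1) * (k + 1) = genBinom x k * (x + 1) := by
    have hprod : ∏ i ∈ range k, (x + 1 - (i + 1 : ℕ)) = ∏ i ∈ range k, (x - i) :=
      prod_congr rfl fun i _ => by push_cast; ring
    rw [genBinom, genBinom, prod_range_succ', hprod, Nat.factorial_succ, Nat.cast_mul,
      Nat.cast_succ, Nat.cast_zero, sub_zero]
    field_simp
  apply mul_right_cancel₀ (Nat.cast_add_one_ne_zero k : (k + 1 : ℝ) ≠ 0)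
  rw [hshift, add_mul, genBinom_succ_mul]
  ring

/-- The Laguerre polynomial `L_N^{(a)}` as a formal polynomial. -/
def laguerre (N : ℕ) (a : ℝ) : Polynomial ℝ :=
  ∑ k ∈ range (N + 1), Polynomial.monomial k ((-1) ^ k * genBinom (N + a) (N - k) / k.factorial)

theorem coeff_laguerre (N : ℕ) (a : ℝ) (k : ℕ) : (laguerre N a).coeff k =
    if k ≤ N then (-1) ^ k * genBinom (N + a) (N - k) / k.factorial else 0 := by
  simp only [laguerre, Polynomial.finsetSum_coeff, Polynomial.coeff_monomial, sum_ite_eq',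
    mem_range, Nat.lt_succ_iff]

theorem eval_laguerre (N : ℕ) (a z : ℝ) : eval z (laguerre N a) = lagL N a z := by
  rw [lagL, if_neg (by omega), laguerre, Polynomial.eval_finsetSum]
  simp only [Int.toNat_natCast, Polynomial.eval_monomial, Int.cast_natCast]
  exact sum_congr rfl fun k _ => by ring

theorem laguerre_succ_deriv (N : ℕ) (a : ℝ) : (laguerre (N + 1) a)′ = -laguerre N (a + 1) := by
  ext k
  rw [polynomial_deriv, Polynomial.coeff_derivative, Polynomial.coeff_neg, coeff_laguerre,
    coeff_laguerre]
  rcases le_or_gt k N with hk | hk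
  · rw [if_pos (by omega), if_pos hk, Nat.add_sub_add_right, Nat.factorial_succ, Nat.cast_succ N,
      add_right_comm, add_assoc (N : ℝ)]
    push_cast
    field_simp
    ring
  · rw [if_neg (by omega), if_neg (by omega), zero_mul, neg_zero]

theorem laguerre_sub_deriv (N : ℕ) (a : ℝ) :
    laguerre N a - (laguerre N a)′ = laguerre N (a + 1) := by
  ext k
  rw [polynomial_deriv, Polynomial.coeff_sub, Polynomial.coeff_derivative, coeff_laguerre,
    coeff_laguerre, coeff_laguerre]
  rcases lt_trichotomy k N with hk | rfl | hk
  · obtain ⟨j, rfl⟩ := Nat.exists_eq_add_of_lt hk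
    rw [if_pos hk.le, if_pos (by omega), if_pos hk.le, Nat.factorial_succ, ← add_assoc _ a,
      show k + j + 1 - k = j + 1 by omega, show k + j + 1 - (k + 1) = j by omega,
      genBinom_succ_succ]
    push_cast
    field_simp
    ring
  · rw [if_pos le_rfl, if_neg (by omega), if_pos le_rfl, Nat.sub_self, genBinom_zero,
      genBinom_zero, zero_mul, sub_zero]
  · rw [if_neg (by omega), if_neg (by omega), if_neg (by omega), zero_mul, sub_zero]

theorem laguerre_ode (N : ℕ) (a : ℝ) :
    X * (laguerre N a)′′ + (C a + 1 - X) * (laguerre N a)′ + C (N : ℝ) * laguerre N a = 0 := by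
  ext k
  rw [← Polynomial.C_1, ← Polynomial.C_add, sub_mul, Polynomial.coeff_add, Polynomial.coeff_add,
    Polynomial.coeff_sub, coeff_X_mul_derivative, coeff_X_mul_derivative, Polynomial.coeff_C_mul,
    Polynomial.coeff_C_mul, polynomial_deriv, Polynomial.coeff_derivative, Polynomial.coeff_zero,
    coeff_laguerre, coeff_laguerre]
  rcases lt_trichotomy k N with hk | rfl | hk
  · obtain ⟨j, rfl⟩ := Nat.exists_eq_add_of_lt hk
    have hj := genBinom_succ_mul ((k + j + 1 : ℕ) + a) j
    rw [if_pos hk.le, if_pos (by omega), Nat.factorial_succ,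
      show k + j + 1 - k = j + 1 by omega, show k + j + 1 - (k + 1) = j by omega, pow_succ]
    push_cast at hj ⊢
    field_simp
    linear_combination (-1 : ℝ) ^ k * hj
  · rw [if_pos le_rfl, if_neg (by omega)]
    ring
  · rw [if_neg (by omega), if_neg (by omega)]
    ring

theorem coeff_laguerre_self_ne_zero (N : ℕ) (a : ℝ) : (laguerre N a).coeff N ≠ 0 := by
  simp [coeff_laguerre, genBinom_zero, Nat.factorial_ne_zero]

theorem laguerre_ne_zero (N : ℕ) (a : ℝ) : laguerre N a ≠ 0 := fun h =>
  coeff_laguerre_self_ne_zero N a (by rw [h, Polynomial.coeff_zero])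

theorem natDegree_laguerre (N : ℕ) (a : ℝ) : (laguerre N a).natDegree = N :=
  Polynomial.natDegree_eq_of_le_of_coeff_ne_zero
    (Polynomial.natDegree_le_iff_coeff_eq_zero.2 fun k hk => by
      rw [coeff_laguerre, if_neg (by omega)])
    (coeff_laguerre_self_ne_zero N a)

theorem hankelDet_laguerre_ne_zero {N n : ℕ} (hn : n ≤ N + 1) (a : ℝ) :
    hankelDet (laguerre N a) n ≠ 0 :=
  hankelDet_ne_zero (laguerre_ne_zero N a) (by rwa [natDegree_laguerre])

theorem iteratedDeriv_eval (p : Polynomial ℝ) (k : ℕ) :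
    iteratedDeriv k (fun z => eval z p) = fun z => eval z (Differential.deriv^[k] p) := by
  induction k with
  | zero => simp
  | succ k ih =>
    funext z
    rw [iteratedDeriv_succ, ih, Polynomial.deriv, Function.iterate_succ_apply', polynomial_deriv]

theorem genLag_eq_eval_hankelDet {i : ℤ} {n N : ℕ} (h : i + n = N) (a : ℝ) :
    genLag i n a = fun z => eval z (hankelDet (laguerre N (a + 1)) n) := by
  funext z
  have hlag : lagL N (a + 1) = fun t => eval t (laguerre N (a + 1)) :=
    funext fun t => (eval_laguerre N _ t).symm
  rw [genLag, h, hlag, hankelDet, ← Polynomial.coe_evalRingHom, RingHom.map_det]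
  congr 1
  ext j k
  exact congrFun (iteratedDeriv_eval _ _) z

theorem laguerre_deriv_sub (N : ℕ) (a : ℝ) :
    (laguerre N a)′ - laguerre N a = -laguerre N (a + 1) := by
  rw [← laguerre_sub_deriv, neg_sub]

theorem laguerre_succ_deriv_deriv_sub (N : ℕ) (a : ℝ) :
    (laguerre (N + 1) a)′′ - (laguerre (N + 1) a)′ = laguerre N (a + 2) := by
  rw [laguerre_succ_deriv, map_neg, sub_neg_eq_add, neg_add_eq_sub, laguerre_sub_deriv]
  ring_nf

theorem hankelDet_neg_laguerre_ne_zero {N n : ℕ} (hn : n ≤ N + 1) (a : ℝ) :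
    hankelDet (-laguerre N a) n ≠ 0 := by
  rw [hankelDet_neg]
  exact mul_ne_zero (pow_ne_zero n (neg_ne_zero.2 one_ne_zero)) (hankelDet_laguerre_ne_zero hn a)

theorem isHankelRegular_laguerre {r N : ℕ} (hr : r ≤ N + 1) (a : ℝ) :
    IsHankelRegular r (laguerre (N + 1) a) where
  self _ hn := hankelDet_laguerre_ne_zero (by omega) a
  deriv n hn := by
    rw [laguerre_succ_deriv]
    exact hankelDet_neg_laguerre_ne_zero (by omega) _
  deriv_sub n hn := by
    rw [laguerre_deriv_sub]
    exact hankelDet_neg_laguerre_ne_zero (by omega) _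
  deriv_deriv_sub n hn := by
    rw [laguerre_succ_deriv_deriv_sub]
    exact hankelDet_laguerre_ne_zero (by omega) _

theorem neg_genLag_mul_genLag {m n N : ℕ} (h : m + n = N + 1) (μ z : ℝ) :
    -(genLag m n μ z * genLag (m - 2) (n + 1) μ z) =
      eval z (hankelNum (laguerre (N + 1) μ) n) := by
  rw [genLag_eq_eval_hankelDet (N := N + 1) (by omega),
    genLag_eq_eval_hankelDet (N := N) (by push_cast; omega), hankelNum,
    laguerre_deriv_sub, laguerre_succ_deriv, hankelDet_neg, hankelDet_neg]
  have hsign : (-1 : ℝ) ^ n * (-1) ^ n = 1 := by rw [← mul_pow, neg_one_mul, neg_neg, one_pow]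
  simp only [Polynomial.eval_mul, Polynomial.eval_pow, Polynomial.eval_neg, Polynomial.eval_one]
  linear_combination eval z (hankelDet (laguerre (N + 1) (μ + 1)) n) *
    eval z (hankelDet (laguerre N (μ + 1)) (n + 1)) * hsign

theorem genLag_sub_one_succ {m n N : ℕ} (h : m + n = N) (μ : ℝ) :
    genLag (m - 1) (n + 1) (μ - 1) = fun z => eval z (hankelDet (laguerre N μ) (n + 1)) := by
  rw [genLag_eq_eval_hankelDet (N := N) (by push_cast; omega), sub_add_cancel]

theorem genLag_sub_one {m n N : ℕ} (h : m + n = N + 1) (μ : ℝ) :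
    genLag (m - 1) n (μ + 1) = fun z =>
      eval z (hankelDet ((laguerre (N + 1) μ)′′ - (laguerre (N + 1) μ)′) n) := by
  rw [genLag_eq_eval_hankelDet (N := N) (by omega), laguerre_succ_deriv_deriv_sub, add_assoc,
    one_add_one_eq_two]

theorem genLag_mul_genLag {m n N : ℕ} (h : m + n = N + 1) (μ z : ℝ) :
    genLag (m - 1) n (μ + 1) z * genLag (m - 1) (n + 1) (μ - 1) z =
      eval z (hankelDenom (laguerre (N + 1) μ) n) := by
  rw [genLag_sub_one h, genLag_sub_one_succ h, hankelDenom, Polynomial.eval_mul, mul_comm]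

end Laguerre

section RationalSolution

open scoped Differential
open Polynomial (X C eval)

theorem deriv_log_eval_hankelDet {f : Polynomial ℝ} {n : ℕ} (h : IsHankelRegular (n + 1) f) {x : ℝ}
    (hx : eval x (hankelDenom f n) ≠ 0) :
    deriv (fun t => Real.log (eval t (hankelDet f (n + 1)) / eval t (hankelDet (f′′ - f′) n))) x =
      eval x (hankelNum f n) / eval x (hankelDenom f n) := by
  rw [hankelDenom, Polynomial.eval_mul] at hx ⊢
  rw [deriv_log_eval_div (left_ne_zero_of_mul hx) (right_ne_zero_of_mul hx),
    quotientDeriv_hankelDet h]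

theorem symmetricPVEquation_eval_hankel {f : Polynomial ℝ} {n : ℕ} {a ν x : ℝ}
    (h : IsHankelRegular (n + 1) f) (hf : X * f′′ + (C a + 1 - X) * f′ + C ν * f = 0)
    (hx : eval x (hankelDenom f n) ≠ 0) {u : ℝ → ℝ}
    (hu : u = fun t => eval t (hankelNum f n) / eval t (hankelDenom f n)) :
    SymmetricPVEquation x (n - ν) (ν + n + a + 1) a (u x) (deriv u x) (iteratedDeriv 2 u x) := by
  rw [hu, (hasDerivAt_eval_div hx).deriv, iteratedDeriv_two_eval_div hx,
    symmetricPVEquation_div hx]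
  simpa using (symmetricPVEquationDiv_hankel h Polynomial.derivative_X Polynomial.derivative_C
    Polynomial.derivative_C hf).map (Polynomial.evalRingHom x)

end RationalSolution

/-- rational solution of the second-order equation coming from the
symmetric fifth Painlevé system `sP_V`. -/
theorem spv_rational_solution (m n : ℕ) (hm : 1 ≤ m) (hn : 1 ≤ n) (μ : ℝ) (u : ℝ → ℝ)
    (hu : u = fun z =>
      -(genLag (m : ℤ) n μ z * genLag ((m : ℤ) - 2) (n + 1) μ z) /
        (genLag ((m : ℤ) - 1) n (μ + 1) z * genLag ((m : ℤ) - 1) (n + 1) (μ - 1) z)) :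
    ∀ z : ℝ, z ≠ 0 →
      genLag ((m : ℤ) - 1) n (μ + 1) z * genLag ((m : ℤ) - 1) (n + 1) (μ - 1) z ≠ 0 →
      u z ≠ 0 → u z ≠ 1 →
      (u z = deriv (fun t => Real.log
          (genLag ((m : ℤ) - 1) (n + 1) (μ - 1) t / genLag ((m : ℤ) - 1) n (μ + 1) t)) z)
      ∧ iteratedDeriv 2 u z
        = (1 / 2) * (1 / u z + 1 / (u z - 1)) * (deriv u z) ^ 2
            - (1 / z) * deriv u z
            + ((u z - 1) ^ 2 * (m : ℝ) ^ 2
                - (u z) ^ 2 * ((m : ℝ) + 2 * n + μ + 1) ^ 2) /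
              (2 * z ^ 2 * u z * (u z - 1))
            + μ * u z * (u z - 1) / z
            + u z * (u z - 1) * (2 * u z - 1) / 2 := by
  intro z hz hdenom h0 h1
  obtain ⟨N, hN⟩ : ∃ N, m + n = N + 1 := Nat.exists_eq_succ_of_ne_zero (by omega)
  have hreg : IsHankelRegular (n + 1) (laguerre (N + 1) μ) :=
    isHankelRegular_laguerre (by omega) μ
  have hu' : u = fun t => Polynomial.eval t (hankelNum (laguerre (N + 1) μ) n) /
      Polynomial.eval t (hankelDenom (laguerre (N + 1) μ) n) := by
    simp only [hu, neg_genLag_mul_genLag hN, genLag_mul_genLag hN]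
  rw [genLag_mul_genLag hN] at hdenom
  have hsPV := symmetricPVEquation_eval_hankel hreg (laguerre_ode (N + 1) μ) hdenom hu'
  constructor
  · rw [hu', genLag_sub_one_succ hN, genLag_sub_one hN, deriv_log_eval_hankelDet hreg hdenom]
  · have hκ₁ : (n - (N + 1 : ℕ) : ℝ) ^ 2 = (m : ℝ) ^ 2 := by rw [← hN]; push_cast; ring
    have hκ₃ : ((N + 1 : ℕ) + n + μ + 1 : ℝ) = m + 2 * n + μ + 1 := by
      rw [← hN]; push_cast; ring
    rw [← hκ₁, ← hκ₃]
    exact hsPV.eq_div hz h0 h1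
end
end
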